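/- arXiv:math/0402257 — 7 statements merged into one kernel-verified Lean document; each statement's English description precedes it below -/
import Mathlib

section
/- Let n ≥ 2, let Λ be a subset of 𝒮⁺ × ℝ and let Λ̄ be its closure in 𝒮⁺ × ℝ. Then Ω⁺(Λ̄) contains the topological interior of Ω⁺(Λ), and likewise Ω⁻(Λ̄) contains the interior of Ω⁻(Λ). -/
/-! For fixed `y`, the condition `⟨y|v⟩ ≤ s` is closed in `(v, s)`, so every `y ∈ Ω⁺(Λ)` satisfies
it for all `(v, s)` in the closure of `Λ`; only strictness can be lost. If `x` is interior to `Ω⁺(Λ)`,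
strictness is recovered by applying this to `y = x - t e₀` with small `t > 0`: since `v` is
future-oriented, `⟨y|v⟩ = ⟨x|v⟩ + t v₀ > ⟨x|v⟩`. For `Ω⁻` one uses `y = x + t e₀`. -/

open Set

noncomputable section

/-- The Minkowski bilinear form `⟨x|y⟩ = -x₀y₀ + x₁y₁ + … + x_{n-1}y_{n-1}` on `ℝⁿ`. -/
def mink {n : ℕ} (x y : Fin n → ℝ) : ℝ :=
  ∑ i : Fin n, (if (i : ℕ) = 0 then (-1 : ℝ) else 1) * x i * y i

/-- `𝒮⁺`: future-oriented lightlike vectors of Euclidean norm 1. -/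
def Splus (n : ℕ) : Set (Fin n → ℝ) :=
  {v | mink v v = 0 ∧ ∑ i : Fin n, v i ^ 2 = 1 ∧ ∀ i : Fin n, (i : ℕ) = 0 → 0 < v i}

/-- `Ω⁺(Λ) = {x : ⟨x|v⟩ < s for all (v,s) ∈ Λ}`. -/
def OmegaPlus {n : ℕ} (Λ : Set ((Fin n → ℝ) × ℝ)) : Set (Fin n → ℝ) :=
  {x | ∀ p ∈ Λ, mink x p.1 < p.2}

/-- `Ω⁻(Λ) = {x : ⟨x|v⟩ > s for all (v,s) ∈ Λ}`. -/
def OmegaMinus {n : ℕ} (Λ : Set ((Fin n → ℝ) × ℝ)) : Set (Fin n → ℝ) :=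
  {x | ∀ p ∈ Λ, p.2 < mink x p.1}

/-- Moving `x` along the time axis shifts `⟨x|v⟩` by a multiple of `v₀`. -/
lemma mink_add_smul_single {n : ℕ} (i : Fin n) (hi : (i : ℕ) = 0) (x v : Fin n → ℝ) (t : ℝ) :
    mink (x + t • Pi.single i (1 : ℝ)) v = mink x v - t * v i := by
  have h : mink (Pi.single i (1 : ℝ)) v = -v i := by
    unfold mink
    rw [Finset.sum_eq_single i]
    · simp [hi]
    · intro j _ hj
      simp [hj]
    · simp
  have h2 : mink (x + t • Pi.single i (1 : ℝ)) v
      = mink x v + t * mink (Pi.single i (1 : ℝ)) v := by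
    unfold mink
    rw [Finset.mul_sum, ← Finset.sum_add_distrib]
    refine Finset.sum_congr rfl fun j _ => ?_
    simp only [Pi.add_apply, Pi.smul_apply, smul_eq_mul]
    ring
  rw [h2, h]
  ring

lemma continuous_mink_right {n : ℕ} (y : Fin n → ℝ) :
    Continuous fun p : (Fin n → ℝ) × ℝ => mink y p.1 := by
  unfold mink
  fun_prop

/-- An interior point of `U` stays in `U` under small displacements in either direction. -/
lemma exists_shift_mem {n : ℕ} {U : Set (Fin n → ℝ)} {x : Fin n → ℝ} (hx : x ∈ interior U)
    (e : Fin n → ℝ) : ∃ t : ℝ, 0 < t ∧ x + t • e ∈ U ∧ x + (-t) • e ∈ U := by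
  have hU : U ∈ nhds x := mem_interior_iff_mem_nhds.mp hx
  have h1 : Filter.Tendsto (fun t : ℝ => x + t • e) (nhds 0) (nhds x) := by
    have hc : Continuous fun t : ℝ => x + t • e := by fun_prop
    simpa using hc.tendsto 0
  have h2 : Filter.Tendsto (fun t : ℝ => x + (-t) • e) (nhds 0) (nhds x) := by
    have hc : Continuous fun t : ℝ => x + (-t) • e := by fun_prop
    simpa using hc.tendsto 0
  have h3 := ((h1.eventually hU).and (h2.eventually hU)).filter_mono
    (nhdsWithin_le_nhds (s := Ioi (0 : ℝ)))
  obtain ⟨t, ht, htpos⟩ := (h3.and self_mem_nhdsWithin).exists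
  exact ⟨t, htpos, ht⟩

/-- `Ω⁺` of the closure of `Λ` in `𝒮⁺ × ℝ` contains the interior of `Ω⁺(Λ)`,
and likewise for `Ω⁻`. -/
theorem stmt0 {n : ℕ} (hn : 2 ≤ n) (Λ : Set ((Fin n → ℝ) × ℝ))
    (hΛ : Λ ⊆ Splus n ×ˢ (univ : Set ℝ)) :
    interior (OmegaPlus Λ) ⊆ OmegaPlus (closure Λ ∩ Splus n ×ˢ (univ : Set ℝ)) ∧
    interior (OmegaMinus Λ) ⊆ OmegaMinus (closure Λ ∩ Splus n ×ˢ (univ : Set ℝ)) := by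
  have hn0 : 0 < n := by omega
  refine ⟨fun x hx p hp => ?_, fun x hx p hp => ?_⟩
  all_goals
    obtain ⟨t, ht, hplus, hminus⟩ := exists_shift_mem hx (Pi.single (⟨0, hn0⟩ : Fin n) (1 : ℝ))
    have hv : 0 < p.1 ⟨0, hn0⟩ := hp.2.1.2.2 _ rfl
    have htv := mul_pos ht hv
  · have hsub : Λ ⊆ {q : (Fin n → ℝ) × ℝ | mink (x + (-t) • Pi.single ⟨0, hn0⟩ (1 : ℝ)) q.1 ≤ q.2} :=
      fun q hq => (hminus q hq).le
    have h : mink (x + (-t) • Pi.single ⟨0, hn0⟩ (1 : ℝ)) p.1 ≤ p.2 := closure_minimal hsub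
      (isClosed_le (continuous_mink_right _) continuous_snd) hp.1
    rw [mink_add_smul_single _ rfl] at h
    linarith
  · have hsub : Λ ⊆ {q : (Fin n → ℝ) × ℝ | q.2 ≤ mink (x + t • Pi.single ⟨0, hn0⟩ (1 : ℝ)) q.1} :=
      fun q hq => (hplus q hq).le
    have h : p.2 ≤ mink (x + t • Pi.single ⟨0, hn0⟩ (1 : ℝ)) p.1 := closure_minimal hsub
      (isClosed_le continuous_snd (continuous_mink_right _)) hp.1
    rw [mink_add_smul_single _ rfl] at h
    linarith
end
end

section
/- Let n ≥ 2 and let Λ ⊆ 𝒮⁺ × ℝ be a subset whose closure Λ̄ in 𝒮⁺ × ℝ is future regular. Then Ω⁺(Λ̄) equals the topological interior of Ω⁺(Λ). -/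
/-!
Since `Ω⁺(Λ̄)` is open and contained in `Ω⁺(Λ)`, it lies in the interior. Conversely, if `x` is
interior to `Ω⁺(Λ)` and `(v, s) ∈ Λ̄`, then `x` can be moved a little along a direction `w` with
`⟨w|v⟩ > 0` while staying in `Ω⁺(Λ)`. The weak inequality survives passage to the closure, so
`⟨x + ε w|v⟩ ≤ s`, and hence `⟨x|v⟩ < s`. A suitable `w` is `v` with its time coordinate negated,
for which `⟨w|v⟩` is the squared Euclidean norm of `v`.
-/

open Set

noncomputable section

/-- Time reflection: the vector with `⟨timeReflect v|y⟩` equal to the Euclidean inner product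
of `v` and `y`. -/
def timeReflect {n : ℕ} (v : Fin n → ℝ) : Fin n → ℝ :=
  fun i => (if (i : ℕ) = 0 then (-1 : ℝ) else 1) * v i

theorem mink_timeReflect_self {n : ℕ} (v : Fin n → ℝ) :
    mink (timeReflect v) v = ∑ i : Fin n, v i ^ 2 := by
  unfold mink timeReflect
  refine Finset.sum_congr rfl fun i _ => ?_
  split_ifs <;> ring

theorem mink_add_smul {n : ℕ} (x w v : Fin n → ℝ) (t : ℝ) :
    mink (x + t • w) v = mink x v + t * mink w v := by
  unfold mink
  rw [Finset.mul_sum, ← Finset.sum_add_distrib]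
  refine Finset.sum_congr rfl fun i _ => ?_
  simp only [Pi.add_apply, Pi.smul_apply, smul_eq_mul]
  ring

theorem mink_le_of_mem_closure {n : ℕ} {Λ : Set ((Fin n → ℝ) × ℝ)} {y : Fin n → ℝ}
    (hy : y ∈ OmegaPlus Λ) {p : (Fin n → ℝ) × ℝ} (hp : p ∈ closure Λ) : mink y p.1 ≤ p.2 := by
  have hcl : IsClosed {q : (Fin n → ℝ) × ℝ | mink y q.1 ≤ q.2} := by
    unfold mink
    exact isClosed_le (by fun_prop) (by fun_prop)
  exact closure_minimal (fun q hq => (hy q hq).le) hcl hp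

/-- if the closure `Λ̄` of `Λ` in `𝒮⁺ × ℝ` is future regular, then
`Ω⁺(Λ̄)` is the interior of `Ω⁺(Λ)`. -/
theorem stmt3 {n : ℕ} (hn : 2 ≤ n) (Λ : Set ((Fin n → ℝ) × ℝ))
    (hΛ : Λ ⊆ Splus n ×ˢ (univ : Set ℝ))
    (hreg : (OmegaPlus (closure Λ ∩ Splus n ×ˢ (univ : Set ℝ))).Nonempty ∧
      IsOpen (OmegaPlus (closure Λ ∩ Splus n ×ˢ (univ : Set ℝ)))) :
    OmegaPlus (closure Λ ∩ Splus n ×ˢ (univ : Set ℝ)) = interior (OmegaPlus Λ) := by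
  refine Subset.antisymm (interior_maximal ?_ hreg.2) ?_
  · exact fun x hx p hp => hx p ⟨subset_closure hp, hΛ hp⟩
  · intro x hx p hp
    have hcont : Continuous fun t : ℝ => x + t • timeReflect p.1 := by fun_prop
    have hev : ∀ᶠ t in nhds (0 : ℝ), x + t • timeReflect p.1 ∈ OmegaPlus Λ :=
      hcont.continuousAt.eventually_mem (by simpa using mem_interior_iff_mem_nhds.mp hx)
    obtain ⟨ε, hε, hball⟩ := Metric.eventually_nhds_iff.mp hev
    have hmem := hball (y := ε / 2) (by
      rw [Real.dist_eq, sub_zero, abs_of_pos (half_pos hε)]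
      exact half_lt_self hε)
    have hle := mink_le_of_mem_closure hmem hp.1
    rw [mink_add_smul, mink_timeReflect_self, hp.2.1.2.1] at hle
    linarith
end
end

section
/- Let n ≥ 2 and let Λ be a nonempty closed subset of 𝒮⁺ × ℝ. Then Ω⁺(Λ) is nonempty (equivalently, Λ is future regular) if and only if there exists a real number C with C < s for every (v,s) ∈ Λ; symmetrically, Ω⁻(Λ) is nonempty (equivalently, Λ is past regular) if and only if there exists C with s < C for every (v,s) ∈ Λ. -/
/-!
On `𝒮⁺` all coordinates have absolute value at most `1`, and the time coordinate `v₀` is the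
constant `1/√2`, hence at least `1/2`. For fixed `x` the function `⟨x|·⟩` is therefore bounded
on `𝒮⁺` by `∑ |xᵢ|`, so a point of `Ω⁺(Λ)` (resp. `Ω⁻(Λ)`) bounds the second components of `Λ`
from below (resp. above). Conversely, if the second components are bounded by `C`, then a
sufficiently large multiple of the time axis vector, `±2|C| e₀`, lies in `Ω^±(Λ)`, because
`⟨t e₀|v⟩ = -t v₀`.
-/

open Set

noncomputable section

lemma abs_mink_le {n : ℕ} (x : Fin n → ℝ) {v : Fin n → ℝ} (hv : v ∈ Splus n) :
    |mink x v| ≤ ∑ i, |x i| := by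
  have hv1 : ∀ i, |v i| ≤ 1 := by
    intro i
    have h := Finset.single_le_sum (f := fun i => v i ^ 2) (fun j _ => sq_nonneg (v j))
      (Finset.mem_univ i)
    exact (sq_le_one_iff_abs_le_one (v i)).1 (h.trans hv.2.1.le)
  unfold mink
  refine (Finset.abs_sum_le_sum_abs _ _).trans (Finset.sum_le_sum fun i _ => ?_)
  have hs : |(if (i : ℕ) = 0 then (-1 : ℝ) else 1)| = 1 := by split_ifs <;> simp
  rw [abs_mul, abs_mul, hs, one_mul]
  exact mul_le_of_le_one_right (abs_nonneg _) (hv1 i)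

lemma mink_single_zero {m : ℕ} (t : ℝ) (v : Fin (m + 1) → ℝ) :
    mink (Pi.single 0 t) v = -(t * v 0) := by
  simp [mink, Fin.sum_univ_succ]

/-- Adding the equations `-v₀² + ∑ vᵢ² = 0` and `v₀² + ∑ vᵢ² = 1` pins down `v₀² = 1/2`. -/
lemma half_le_of_mem_Splus {m : ℕ} {v : Fin (m + 1) → ℝ} (hv : v ∈ Splus (m + 1)) :
    1 / 2 ≤ v 0 := by
  obtain ⟨h1, h2, h3⟩ := hv
  have h0 := h3 0 rfl
  simp only [mink, Fin.sum_univ_succ, Fin.val_zero, Fin.val_succ, if_true, Nat.succ_ne_zero,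
    if_false, one_mul, ← pow_two] at h1 h2
  nlinarith

/-- for a nonempty closed `Λ ⊆ 𝒮⁺ × ℝ`, `Ω⁺(Λ)` is nonempty iff the second
components of elements of `Λ` are bounded below away, i.e. `∃ C, ∀ (v,s) ∈ Λ, C < s`;
symmetrically for `Ω⁻(Λ)`. -/
theorem stmt4 {n : ℕ} (hn : 2 ≤ n) (Λ : Set ((Fin n → ℝ) × ℝ))
    (hΛ : Λ ⊆ Splus n ×ˢ (univ : Set ℝ)) (hne : Λ.Nonempty)
    (hclosed : closure Λ ∩ Splus n ×ˢ (univ : Set ℝ) ⊆ Λ) :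
    ((OmegaPlus Λ).Nonempty ↔ ∃ C : ℝ, ∀ p ∈ Λ, C < p.2) ∧
    ((OmegaMinus Λ).Nonempty ↔ ∃ C : ℝ, ∀ p ∈ Λ, p.2 < C) := by
  obtain ⟨m, rfl⟩ : ∃ m, n = m + 1 := ⟨n - 1, by omega⟩
  refine ⟨⟨?_, ?_⟩, ⟨?_, ?_⟩⟩
  · rintro ⟨x, hx⟩
    refine ⟨-∑ i, |x i|, fun p hp => ?_⟩
    exact (abs_le.1 (abs_mink_le x (hΛ hp).1)).1.trans_lt (hx p hp)
  · rintro ⟨C, hC⟩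
    refine ⟨Pi.single 0 (2 * |C|), fun p hp => ?_⟩
    rw [mink_single_zero]
    have h := half_le_of_mem_Splus (hΛ hp).1
    nlinarith [hC p hp, abs_nonneg C, neg_abs_le C]
  · rintro ⟨x, hx⟩
    refine ⟨∑ i, |x i|, fun p hp => ?_⟩
    exact (hx p hp).trans_le (abs_le.1 (abs_mink_le x (hΛ hp).1)).2
  · rintro ⟨C, hC⟩
    refine ⟨Pi.single 0 (-(2 * |C|)), fun p hp => ?_⟩
    rw [mink_single_zero]
    have h := half_le_of_mem_Splus (hΛ hp).1
    nlinarith [hC p hp, abs_nonneg C, le_abs_self C]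
end
end

section
/- Let n ≥ 2. A nonempty closed subset Λ of 𝒮⁺ × ℝ is both future regular and past regular if and only if Λ is compact. -/
/-!
A vector `v ∈ 𝒮⁺` satisfies `2 v₀² = N(v)² - |v|² = 1`, so `v₀` is bounded away from `0`. Two facts
follow: `𝒮⁺` is a closed subset of the unit cube, hence compact, and the values `⟨x|v⟩`, `v ∈ 𝒮⁺`,
can be made uniformly large of either sign by moving `x` along the time axis.

If `x ∈ Ω⁺(Λ)` and `y ∈ Ω⁻(Λ)`, then `⟨x|v⟩ < s < ⟨y|v⟩` on `Λ`, so `s` is bounded on `Λ`, and `Λ` is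
closed and bounded in a finite-dimensional space. Conversely, if `Λ` is compact, then `s` is bounded
on `Λ`, so points far up the time axis lie in `Ω⁺(Λ)` and points far down in `Ω⁻(Λ)`, while
openness holds because a strict inequality between continuous functions, required over a compact set
of parameters, is an open condition.
-/

open Set

noncomputable section

lemma continuous_mink {n : ℕ} :
    Continuous fun q : (Fin n → ℝ) × (Fin n → ℝ) => mink q.1 q.2 := by
  unfold mink
  fun_prop

lemma Splus_time_sq {n : ℕ} {v : Fin n → ℝ} (hv : v ∈ Splus n) (i : Fin n) (hi : (i : ℕ) = 0) :
    v i ^ 2 = 1 / 2 := by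
  obtain ⟨h0, h1, -⟩ := hv
  have h : ∑ j : Fin n, v j ^ 2 - mink v v = 2 * v i ^ 2 := by
    unfold mink
    rw [← Finset.sum_sub_distrib, Finset.sum_eq_single i]
    · rw [if_pos hi]; ring
    · intro j _ hj
      have : (j : ℕ) ≠ 0 := fun h => hj (Fin.ext (h.trans hi.symm))
      rw [if_neg this]; ring
    · simp
  linarith

lemma Splus_time_ge {n : ℕ} {v : Fin n → ℝ} (hv : v ∈ Splus n) (i : Fin n) (hi : (i : ℕ) = 0) :
    1 / 2 ≤ v i := by
  have h := Splus_time_sq hv i hi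
  have hp := hv.2.2 i hi
  nlinarith

lemma isClosed_Splus (n : ℕ) : IsClosed (Splus n) := by
  -- The open condition `0 < v₀` may be replaced by the closed condition `1 / 2 ≤ v₀`.
  have h : Splus n = {v | mink v v = 0} ∩ ({v | ∑ i : Fin n, v i ^ 2 = 1} ∩
      {v | ∀ i : Fin n, (i : ℕ) = 0 → 1 / 2 ≤ v i}) := by
    ext v
    refine ⟨fun hv => ⟨hv.1, hv.2.1, Splus_time_ge hv⟩, fun hv => ⟨hv.1, hv.2.1, fun i hi => ?_⟩⟩
    have : 1 / 2 ≤ v i := hv.2.2 i hi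
    linarith
  rw [h]
  refine (isClosed_eq (continuous_mink.comp (continuous_id.prodMk continuous_id))
    continuous_const).inter ((isClosed_eq (by fun_prop) continuous_const).inter ?_)
  rw [show {v : Fin n → ℝ | ∀ i : Fin n, (i : ℕ) = 0 → 1 / 2 ≤ v i} =
    ⋂ (i : Fin n) (_ : (i : ℕ) = 0), {v | 1 / 2 ≤ v i} by ext; simp]
  exact isClosed_iInter fun i => isClosed_iInter fun _ =>
    isClosed_le continuous_const (continuous_apply i)

lemma isCompact_Splus (n : ℕ) : IsCompact (Splus n) := by
  refine (isCompact_univ_pi fun _ : Fin n => isCompact_Icc (a := (-1 : ℝ)) (b := 1)).of_isClosed_subset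
    (isClosed_Splus n) fun v hv i _ => ?_
  have h : v i ^ 2 ≤ ∑ j : Fin n, v j ^ 2 :=
    Finset.single_le_sum (f := fun j => v j ^ 2) (fun j _ => sq_nonneg _) (Finset.mem_univ i)
  rw [hv.2.1] at h
  exact abs_le.1 ((sq_le_one_iff_abs_le_one _).1 h)

lemma mink_single {n : ℕ} (i : Fin n) (hi : (i : ℕ) = 0) (c : ℝ) (v : Fin n → ℝ) :
    mink (Pi.single i c) v = -(c * v i) := by
  unfold mink
  rw [Finset.sum_eq_single i]
  · simp [hi]
  · intro j _ hj
    simp [hj]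
  · simp

lemma isOpen_OmegaPlus {n : ℕ} {Λ : Set ((Fin n → ℝ) × ℝ)} (h : IsCompact Λ) :
    IsOpen (OmegaPlus Λ) := by
  refine isOpen_iff_mem_nhds.2 fun x hx => h.eventually_forall_of_forall_eventually fun p hp => ?_
  exact (isOpen_lt (continuous_mink.comp (continuous_fst.prodMk continuous_snd.fst))
    continuous_snd.snd).mem_nhds (hx p hp)

lemma isOpen_OmegaMinus {n : ℕ} {Λ : Set ((Fin n → ℝ) × ℝ)} (h : IsCompact Λ) :
    IsOpen (OmegaMinus Λ) := by
  refine isOpen_iff_mem_nhds.2 fun x hx => h.eventually_forall_of_forall_eventually fun p hp => ?_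
  exact (isOpen_lt continuous_snd.snd
    (continuous_mink.comp (continuous_fst.prodMk continuous_snd.fst))).mem_nhds (hx p hp)

/-- a nonempty closed subset `Λ` of `𝒮⁺ × ℝ` is both future regular and
past regular iff it is compact. -/
theorem stmt5 {n : ℕ} (hn : 2 ≤ n) (Λ : Set ((Fin n → ℝ) × ℝ))
    (hΛ : Λ ⊆ Splus n ×ˢ (univ : Set ℝ)) (hne : Λ.Nonempty)
    (hclosed : closure Λ ∩ Splus n ×ˢ (univ : Set ℝ) ⊆ Λ) :
    (((OmegaPlus Λ).Nonempty ∧ IsOpen (OmegaPlus Λ)) ∧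
      ((OmegaMinus Λ).Nonempty ∧ IsOpen (OmegaMinus Λ))) ↔ IsCompact Λ := by
  constructor
  · rintro ⟨⟨⟨x, hx⟩, -⟩, ⟨⟨y, hy⟩, -⟩⟩
    have hcont : ∀ z : Fin n → ℝ, ContinuousOn (fun v => mink z v) (Splus n) := fun z =>
      (continuous_mink.comp (continuous_const.prodMk continuous_id)).continuousOn
    obtain ⟨a, ha⟩ := (isCompact_Splus n).bddBelow_image (hcont x)
    obtain ⟨b, hb⟩ := (isCompact_Splus n).bddAbove_image (hcont y)
    have hcl : IsClosed Λ := isClosed_of_closure_subset fun p hp => hclosed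
      ⟨hp, closure_minimal hΛ ((isClosed_Splus n).prod isClosed_univ) hp⟩
    refine ((isCompact_Splus n).prod (isCompact_Icc (a := a) (b := b))).of_isClosed_subset hcl
      fun p hp => ⟨(hΛ hp).1, ?_, ?_⟩
    · exact (ha (mem_image_of_mem _ (hΛ hp).1)).trans (hx p hp).le
    · exact (hy p hp).le.trans (hb (mem_image_of_mem _ (hΛ hp).1))
  · intro hK
    obtain ⟨M, hM⟩ := hK.exists_bound_of_continuousOn (f := Prod.snd) continuous_snd.continuousOn
    have hM0 : 0 ≤ M := by
      obtain ⟨p, hp⟩ := hne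
      exact (norm_nonneg _).trans (hM p hp)
    let i : Fin n := ⟨0, by omega⟩
    -- Since `v₀ ≥ 1 / 2`, time coordinate `±2 (M + 1)` gives `|⟨x|v⟩| ≥ M + 1 > |s|` on `Λ`.
    refine ⟨⟨⟨Pi.single i (2 * (M + 1)), fun p hp => ?_⟩, isOpen_OmegaPlus hK⟩,
      ⟨⟨Pi.single i (-(2 * (M + 1))), fun p hp => ?_⟩, isOpen_OmegaMinus hK⟩⟩
    all_goals
      have hs := abs_le.1 (hM p hp)
      have hv := Splus_time_ge (hΛ hp).1 i rfl
      rw [mink_single i rfl]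
      nlinarith [hs.1, hs.2]
end
end

section
/- Let E be a finite-dimensional real inner product space, let V = ℝ × ℝ × E with quadratic form Q(x,y,v) = xy + ‖v‖², and let g(x,y,v) = (λx, λ⁻¹y, Rv + τ), where λ > 0, λ ≠ 1, R is a linear isometry of E, and Rτ = τ. Then {(x,y,v) ∈ V : xy < 0} ⊆ Ω_g ⊆ {(x,y,v) ∈ V : xy ≤ 0}; in particular the interior of the achronal domain Ω_g equals {(x,y,v) : xy < 0}. -/
/-!
Write `u = (x, y, v)`. The first two coordinates of `g^q u - u` contribute
`(λ^q - 1)(λ^(-q) - 1) xy = -(λ^q - 1)² λ^(-q) xy` to `Q`, a strictly negative multiple of `xy` for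
`q ≠ 0` because `λ ≠ 1`. So `xy < 0` forces `Q(g^q u - u) > 0` for all `q ≠ 0`. On the other hand,
the `E`-coordinate of `g^n u - u` has norm at most `2‖v‖ + n‖τ‖`, so that if `xy > 0` the
exponential growth of `λ^n + λ^(-n)` beats the quadratic growth of its square and
`Q(g^n u - u) ≤ 0` for large `n` (`exists_pow_dominates`). The statement on the interior follows
since every point with `xy = 0` is a limit of points `(x + t, y + t, v)` with positive product.
-/

open Set

noncomputable section

/-- The Lorentzian quadratic form `Q(x,y,v) = xy + ‖v‖²` on `V = ℝ × ℝ × E`. -/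
def Qform {E : Type*} [NormedAddCommGroup E] (p : ℝ × ℝ × E) : ℝ :=
  p.1 * p.2.1 + ‖p.2.2‖ ^ 2

/-- The achronal domain of an affine bijection `g` of `V = ℝ × ℝ × E`:
points `u` with `Q(gᵠ(u) - u) > 0` for every nonzero integer `q`. -/
def achronalDom {E : Type*} [NormedAddCommGroup E] [Module ℝ E]
    (g : (ℝ × ℝ × E) ≃ᵃ[ℝ] (ℝ × ℝ × E)) : Set (ℝ × ℝ × E) :=
  {u | ∀ q : ℤ, q ≠ 0 → 0 < Qform ((g ^ q) u - u)}


section Iterates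

variable {E : Type*} [NormedAddCommGroup E] [InnerProductSpace ℝ E]
  {lam : ℝ} {R : E ≃ₗ[ℝ] E} {τ : E} {g : (ℝ × ℝ × E) ≃ᵃ[ℝ] (ℝ × ℝ × E)}

lemma zpow_coords (hlam : 0 < lam)
    (hg : ∀ p : ℝ × ℝ × E, g p = (lam * p.1, lam⁻¹ * p.2.1, R p.2.2 + τ)) (q : ℤ) :
    ∀ p : ℝ × ℝ × E, ((g ^ q) p).1 = lam ^ q * p.1 ∧ ((g ^ q) p).2.1 = (lam ^ q)⁻¹ * p.2.1 := by
  have h0 := hlam.ne'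
  induction q using Int.induction_on with
  | zero => intro p; simp
  | succ n ih =>
    intro p
    rw [zpow_add_one, AffineEquiv.mul_def, AffineEquiv.trans_apply, (ih _).1, (ih _).2, hg,
      zpow_add_one₀ h0]
    constructor
    · ring
    · simp only [mul_inv]; ring
  | pred n ih =>
    intro p
    have hp : g (g⁻¹ p) = p := g.apply_symm_apply p
    have hx : lam * (g⁻¹ p).1 = p.1 := by
      have := congrArg Prod.fst hp
      rwa [hg] at this
    have hy : lam⁻¹ * (g⁻¹ p).2.1 = p.2.1 := by
      have := congrArg (fun z => z.2.1) hp
      simpa only [hg] using this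
    rw [zpow_sub_one, AffineEquiv.mul_def, AffineEquiv.trans_apply, (ih _).1, (ih _).2,
      zpow_sub_one₀ h0, ← hx, ← hy]
    constructor
    · field_simp
    · field_simp

lemma norm_iterate_le (hR : ∀ v : E, ‖R v‖ = ‖v‖)
    (hg : ∀ p : ℝ × ℝ × E, g p = (lam * p.1, lam⁻¹ * p.2.1, R p.2.2 + τ)) (n : ℕ)
    (p : ℝ × ℝ × E) : ‖((g ^ n) p).2.2‖ ≤ ‖p.2.2‖ + n * ‖τ‖ := by
  induction n with
  | zero => simp
  | succ n ih =>
    rw [pow_succ', AffineEquiv.mul_def, AffineEquiv.trans_apply, hg]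
    have h := norm_add_le (R ((g ^ n) p).2.2) τ
    rw [hR] at h
    push_cast
    linarith

lemma Qform_zpow_sub (hlam : 0 < lam)
    (hg : ∀ p : ℝ × ℝ × E, g p = (lam * p.1, lam⁻¹ * p.2.1, R p.2.2 + τ)) (q : ℤ)
    (p : ℝ × ℝ × E) :
    Qform ((g ^ q) p - p) =
      (2 - lam ^ q - (lam ^ q)⁻¹) * (p.1 * p.2.1) + ‖((g ^ q) p).2.2 - p.2.2‖ ^ 2 := by
  have h : lam ^ q ≠ 0 := (zpow_pos hlam q).ne'
  simp only [Qform, Prod.fst_sub, Prod.snd_sub, (zpow_coords hlam hg q p).1,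
    (zpow_coords hlam hg q p).2]
  field_simp
  ring

end Iterates

/-- For `λ ≠ 1` the sequence `λⁿ + λ⁻ⁿ` grows exponentially, hence faster than the square of an
affine function of `n`. -/
lemma exists_pow_dominates {lam : ℝ} (hlam : 0 < lam) (hlam1 : lam ≠ 1) {c : ℝ} (hc : 0 < c)
    {a b : ℝ} (ha : 0 ≤ a) (hb : 0 ≤ b) :
    ∃ n : ℕ, n ≠ 0 ∧ (a + n * b) ^ 2 ≤ (lam ^ n + (lam ^ n)⁻¹ - 2) * c := by
  obtain ⟨r, hr, hle⟩ : ∃ r : ℝ, 1 < r ∧ ∀ n : ℕ, r ^ n ≤ lam ^ n + (lam ^ n)⁻¹ := by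
    rcases lt_or_gt_of_ne hlam1 with h | h
    · refine ⟨lam⁻¹, (one_lt_inv₀ hlam).2 h, fun n => ?_⟩
      rw [inv_pow]
      have := pow_pos hlam n
      linarith
    · refine ⟨lam, h, fun n => ?_⟩
      have := inv_pos.2 (pow_pos hlam n)
      linarith
  -- For `n ≥ 1` one has `(a + n b)² + 2 c ≤ C n²`, so `n² / rⁿ < c / C` suffices.
  set C := (a + b) ^ 2 + 2 * c with hC
  have hCpos : 0 < C := by positivity
  have hev := (tendsto_pow_const_div_const_pow_of_one_lt 2 hr).eventually
    (gt_mem_nhds (div_pos hc hCpos))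
  obtain ⟨n, hn, hn1⟩ := (hev.and (Filter.eventually_ge_atTop 1)).exists
  refine ⟨n, by omega, ?_⟩
  have hn1' : (1 : ℝ) ≤ n := by exact_mod_cast hn1
  rw [div_lt_div_iff₀ (pow_pos (by linarith) n) hCpos] at hn
  have h1 : (a + n * b) ^ 2 ≤ (n * (a + b)) ^ 2 := by
    apply pow_le_pow_left₀ (by positivity)
    nlinarith
  have h2 : 2 * c ≤ (n : ℝ) ^ 2 * (2 * c) := by
    have : (1 : ℝ) ≤ (n : ℝ) ^ 2 := one_le_pow₀ hn1'
    nlinarith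
  have h3 := mul_le_mul_of_nonneg_right (hle n) hc.le
  rw [hC] at hn
  nlinarith

/-- for a loxodromic isometry `g(x,y,v) = (λx, λ⁻¹y, Rv + τ)` of
`(ℝ × ℝ × E, Q)` one has `{xy < 0} ⊆ Ω_g ⊆ {xy ≤ 0}`; in particular the interior of
the achronal domain `Ω_g` is `{xy < 0}`. -/
theorem stmt7 {E : Type*} [NormedAddCommGroup E] [InnerProductSpace ℝ E]
    [FiniteDimensional ℝ E]
    (lam : ℝ) (hlam : 0 < lam) (hlam1 : lam ≠ 1)
    (R : E ≃ₗ[ℝ] E) (hR : ∀ v : E, ‖R v‖ = ‖v‖) (τ : E) (hτ : R τ = τ)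
    (g : (ℝ × ℝ × E) ≃ᵃ[ℝ] (ℝ × ℝ × E))
    (hg : ∀ p : ℝ × ℝ × E, g p = (lam * p.1, lam⁻¹ * p.2.1, R p.2.2 + τ)) :
    {p : ℝ × ℝ × E | p.1 * p.2.1 < 0} ⊆ achronalDom g ∧
    achronalDom g ⊆ {p : ℝ × ℝ × E | p.1 * p.2.1 ≤ 0} ∧
    interior (achronalDom g) = {p : ℝ × ℝ × E | p.1 * p.2.1 < 0} := by
  have hA : {p : ℝ × ℝ × E | p.1 * p.2.1 < 0} ⊆ achronalDom g := by
    intro p (hp : p.1 * p.2.1 < 0) q hq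
    rw [Qform_zpow_sub hlam hg]
    have hpos := zpow_pos hlam q
    have hne : lam ^ q ≠ 1 := fun h => hq ((zpow_eq_one_iff_right₀ hlam.le hlam1).1 h)
    have hcoef : 2 - lam ^ q - (lam ^ q)⁻¹ < 0 := by
      have hsq : 0 < (lam ^ q - 1) ^ 2 * (lam ^ q)⁻¹ :=
        mul_pos (sq_pos_of_ne_zero (sub_ne_zero.2 hne)) (inv_pos.2 hpos)
      have : 2 - lam ^ q - (lam ^ q)⁻¹ = -((lam ^ q - 1) ^ 2 * (lam ^ q)⁻¹) := by
        field_simp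
        ring
      linarith
    have := mul_pos_of_neg_of_neg hcoef hp
    positivity
  have hB : achronalDom g ⊆ {p : ℝ × ℝ × E | p.1 * p.2.1 ≤ 0} := by
    intro p hp
    by_contra hxy
    have hc : 0 < p.1 * p.2.1 := not_le.1 hxy
    obtain ⟨n, hn, hdom⟩ := exists_pow_dominates hlam hlam1 hc
      (a := 2 * ‖p.2.2‖) (by positivity) (norm_nonneg τ)
    have hQ := hp n (by exact_mod_cast hn)
    rw [Qform_zpow_sub hlam hg, zpow_natCast, zpow_natCast] at hQ
    have h1 : ‖((g ^ n) p).2.2 - p.2.2‖ ≤ 2 * ‖p.2.2‖ + n * ‖τ‖ := by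
      have := norm_sub_le ((g ^ n) p).2.2 p.2.2
      have := norm_iterate_le hR hg n p
      linarith
    have h2 := pow_le_pow_left₀ (norm_nonneg _) h1 2
    linarith
  refine ⟨hA, hB, Subset.antisymm ?_ (interior_maximal hA ?_)⟩
  · intro p hp
    have hle : p.1 * p.2.1 ≤ 0 := hB (interior_subset hp)
    refine lt_of_le_of_ne hle fun h0 => ?_
    have hcont : Continuous fun t : ℝ => ((p.1 + t, p.2.1 + t, p.2.2) : ℝ × ℝ × E) := by fun_prop
    have hnhds : ∀ᶠ t in nhds (0 : ℝ), (p.1 + t, p.2.1 + t, p.2.2) ∈ interior (achronalDom g) :=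
      hcont.continuousAt.eventually (isOpen_interior.mem_nhds (by simpa using hp))
    obtain ⟨ε, hε, hball⟩ := Metric.eventually_nhds_iff.1 hnhds
    have key : ∀ t : ℝ, |t| < ε → t * (p.1 + p.2.1 + t) ≤ 0 := by
      intro t ht
      have : (p.1 + t) * (p.2.1 + t) ≤ 0 :=
        hB (interior_subset (hball (y := t) (by simpa using ht)))
      nlinarith
    -- A shift `t` of the same sign as `x + y` makes `(x + t) (y + t) = t (x + y + t)` positive.
    rcases le_total 0 (p.1 + p.2.1) with hs | hs
    · have := key (ε / 2) (by rw [abs_of_pos] <;> linarith)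
      nlinarith
    · have := key (-(ε / 2)) (by rw [abs_neg, abs_of_pos] <;> linarith)
      nlinarith
  · exact isOpen_lt (by fun_prop) continuous_const
end
end

section
/- Let n ≥ 3 and let g = R∘(id + p) be a linear map of ℝⁿ, where p is a nonzero nilpotent linear map such that id + p preserves ⟨·|·⟩, R is a linear map preserving ⟨·|·⟩ which fixes some timelike vector, and R∘p = p∘R = p (the linear parabolic case). Then the complement of the achronal domain Ω_g is exactly {x ∈ ℝⁿ : p²x = 0 and Rᵠx = x for some nonzero integer q}, i.e. the set of R-periodic points lying in the degenerate hyperplane ker(p²). -/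
/-!
The key is the identity, valid for every integer `q`,
`|g^q x - x|² = |R^q x - x|² + q² |p x|²`,
together with the signs of the two terms on the right.

* `p³ = 0`. If `p^(m+4) = 0`, the range of `p^(m+2)` is totally isotropic (`mink_pow_eq_zero`), hence
  of dimension at most one in Lorentzian signature; the nilpotent `p` kills it, so `p^(m+3) = 0`.
* Hence `g^q x = R^q x + q p x + (q(q-1)/2) p² x`. The vector `R^q x - x` is orthogonal to `p x` and
  `p² x` because `R` is an isometry fixing the range of `p`, while `p² x` is null and orthogonal to
  `p x`; this gives the identity.
* `R^q x - x` is orthogonal to the fixed timelike vector, so its square is nonnegative and vanishes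
  only when `R^q x = x` (`mink_self_pos`). If `p² x = 0` then `|p x|² = 0`; otherwise `p x` is
  orthogonal to the nonzero null vector `p² x` and not proportional to it, so `|p x|² > 0`
  (`mink_self_pos_of_null`).
-/

open Set

noncomputable section

/-- The achronal domain of a linear bijection `g` of `ℝⁿ`:
points `x` with `|gᵠ(x) − x|² > 0` for every nonzero integer `q`. -/
def achronalDomL {n : ℕ} (g : (Fin n → ℝ) ≃ₗ[ℝ] (Fin n → ℝ)) : Set (Fin n → ℝ) :=
  {x | ∀ q : ℤ, q ≠ 0 → 0 < mink ((g ^ q) x - x) ((g ^ q) x - x)}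

lemma mink_add_left {n : ℕ} (x y z : Fin n → ℝ) : mink (x + y) z = mink x z + mink y z := by
  simp only [mink, ← Finset.sum_add_distrib, Pi.add_apply]
  exact Finset.sum_congr rfl fun i _ => by ring

lemma mink_smul_left {n : ℕ} (c : ℝ) (x z : Fin n → ℝ) : mink (c • x) z = c * mink x z := by
  simp only [mink, Finset.mul_sum, Pi.smul_apply, smul_eq_mul]
  exact Finset.sum_congr rfl fun i _ => by ring

lemma mink_comm {n : ℕ} (x y : Fin n → ℝ) : mink x y = mink y x := by
  simp only [mink]
  exact Finset.sum_congr rfl fun i _ => by ring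

lemma mink_sub_left {n : ℕ} (x y z : Fin n → ℝ) : mink (x - y) z = mink x z - mink y z := by
  have h : x - y = x + (-1 : ℝ) • y := by module
  rw [h, mink_add_left, mink_smul_left]
  ring

lemma mink_add_right {n : ℕ} (x y z : Fin n → ℝ) : mink x (y + z) = mink x y + mink x z := by
  rw [mink_comm, mink_add_left, mink_comm y, mink_comm z]

lemma mink_smul_right {n : ℕ} (c : ℝ) (x z : Fin n → ℝ) : mink x (c • z) = c * mink x z := by
  rw [mink_comm, mink_smul_left, mink_comm]

lemma mink_sub_right {n : ℕ} (x y z : Fin n → ℝ) : mink x (y - z) = mink x y - mink x z := by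
  rw [mink_comm, mink_sub_left, mink_comm y, mink_comm z]

lemma mink_zero_left {n : ℕ} (x : Fin n → ℝ) : mink 0 x = 0 := by
  simp [mink]

lemma mink_zero_right {n : ℕ} (x : Fin n → ℝ) : mink x 0 = 0 := by
  simp [mink]

/-- The form is positive definite on the orthogonal of a timelike vector: the reversed
Cauchy–Schwarz inequality, deduced from the Euclidean one on the space coordinates. -/
lemma mink_self_pos {n : ℕ} {u y : Fin n → ℝ} (hu : mink u u < 0) (hy : mink y u = 0)
    (hy0 : y ≠ 0) : 0 < mink y y := by
  rcases n with _ | m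
  · exact absurd (Subsingleton.elim y 0) hy0
  -- Split off the time coordinate; `Y`, `U`, `S` below are the Euclidean products of space parts.
  simp only [mink, Fin.sum_univ_succ, Fin.val_zero, Fin.val_succ, if_true, Nat.succ_ne_zero,
    if_false, one_mul, neg_mul] at *
  have hcs := Finset.sum_mul_sq_le_sq_mul_sq Finset.univ (fun i : Fin m => y i.succ)
    (fun i => u i.succ)
  simp only [pow_two (_ : ℝ)] at hcs
  have hY0 : 0 ≤ ∑ i : Fin m, y i.succ * y i.succ :=
    Finset.sum_nonneg fun i _ => mul_self_nonneg _
  have hU0 : 0 ≤ ∑ i : Fin m, u i.succ * u i.succ :=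
    Finset.sum_nonneg fun i _ => mul_self_nonneg _
  have hYz : ∑ i : Fin m, y i.succ * y i.succ = 0 → ∀ i : Fin m, y i.succ = 0 := by
    intro h i
    have := (Finset.sum_eq_zero_iff_of_nonneg (fun i _ => mul_self_nonneg (y i.succ))).1 h i
      (Finset.mem_univ i)
    exact mul_self_eq_zero.1 this
  generalize ∑ i : Fin m, y i.succ * y i.succ = Y at *
  generalize ∑ i : Fin m, u i.succ * u i.succ = U at *
  generalize ∑ i : Fin m, y i.succ * u i.succ = S at *
  have hS : S = y 0 * u 0 := by linarith
  subst hS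
  have hu0 : 0 < u 0 * u 0 := by linarith
  rcases hY0.eq_or_lt with h | h
  · exfalso
    subst h
    have h1 : y 0 * u 0 = 0 := by nlinarith
    have h2 : y 0 = 0 := by
      rcases mul_eq_zero.1 h1 with h | h
      · exact h
      · simp [h] at hu0
    exact hy0 (funext fun i => Fin.cases h2 (hYz rfl) i)
  · by_contra hcon
    have h1 : Y * U < Y * (u 0 * u 0) := by
      apply mul_lt_mul_of_pos_left _ h
      linarith
    have h2 : Y * (u 0 * u 0) ≤ (y 0 * y 0) * (u 0 * u 0) := by
      apply mul_le_mul_of_nonneg_right _ hu0.le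
      linarith
    nlinarith

/-- A vector orthogonal to a nonzero null vector `b` is spacelike or a multiple of `b`: subtracting
the multiple of `b` that makes it orthogonal to a timelike vector does not change its square. -/
lemma mink_self_pos_of_null {n : ℕ} {u z b : Fin n → ℝ} (hu : mink u u < 0) (hb : mink b b = 0)
    (hb0 : b ≠ 0) (hzb : mink z b = 0) (hz : ∀ c : ℝ, z ≠ c • b) : 0 < mink z z := by
  have hbu : mink b u ≠ 0 := fun h => (mink_self_pos hu h hb0).ne' hb
  set c := mink z u / mink b u
  have h1 : mink (z - c • b) u = 0 := by
    rw [mink_sub_left, mink_smul_left, div_mul_cancel₀ _ hbu, sub_self]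
  have h2 := mink_self_pos hu h1 (sub_ne_zero.2 (hz c))
  simpa [mink_sub_left, mink_sub_right, mink_smul_left, mink_smul_right, hb, hzb, mink_comm b z]
    using h2

/-- The range of `p^a` is orthogonal to the kernel of `p^a`, since the adjoint of `p` is
`-p (1 + p)⁻¹`. -/
lemma mink_pow_eq_zero {n : ℕ} (p : (Fin n → ℝ) →ₗ[ℝ] (Fin n → ℝ))
    (hppres : ∀ x y : Fin n → ℝ, mink (x + p x) (y + p y) = mink x y) (a : ℕ) :
    ∀ x z : Fin n → ℝ, (p ^ a) z = 0 → mink ((p ^ a) x) z = 0 := by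
  induction a with
  | zero =>
    intro x z hz
    simp only [pow_zero, Module.End.one_apply] at hz
    rw [hz, mink_zero_right]
  | succ a ih =>
    intro x z hz
    rw [pow_succ, Module.End.mul_apply] at hz
    have h1 := ih (x + p x) (p z) hz
    have h2 := hppres ((p ^ a) x) z
    have h3 : (p ^ a) (p x) = p ((p ^ a) x) := by
      rw [← Module.End.mul_apply, ← Module.End.mul_apply, ← pow_succ, ← pow_succ']
    rw [pow_succ', Module.End.mul_apply]
    rw [map_add, h3] at h1
    simp only [mink_add_left, mink_add_right] at h1 h2
    linarith

/-- If `p^(m+4) = 0`, then `p` vanishes on the range of `p^(m+2)`, which is totally isotropic and so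
of dimension at most one; this lowers the nilpotency index as long as it exceeds three. -/
lemma parabolic_cube_eq_zero {n : ℕ} {u : Fin n → ℝ} (hu : mink u u < 0)
    (p : (Fin n → ℝ) →ₗ[ℝ] (Fin n → ℝ)) (hnil : IsNilpotent p)
    (hppres : ∀ x y : Fin n → ℝ, mink (x + p x) (y + p y) = mink x y) : p ^ 3 = 0 := by
  have step : ∀ m : ℕ, p ^ (m + 4) = 0 → p ^ (m + 3) = 0 := by
    intro m hm
    refine LinearMap.ext fun x => ?_
    rw [LinearMap.zero_apply, pow_succ' p (m + 2), Module.End.mul_apply]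
    have hker : ∀ y, (p ^ (m + 4)) y = 0 := fun y => by rw [hm, LinearMap.zero_apply]
    have hiso : ∀ y z, mink ((p ^ (m + 2)) y) ((p ^ (m + 2)) z) = 0 := by
      intro y z
      apply mink_pow_eq_zero p hppres
      rw [← Module.End.mul_apply, ← pow_add, show m + 2 + (m + 2) = m + (m + 4) by ring, pow_add,
        Module.End.mul_apply, hker, map_zero]
    have hcomm : p ((p ^ (m + 2)) x) = (p ^ (m + 2)) (p x) := by
      rw [← Module.End.mul_apply, ← Module.End.mul_apply, ← pow_succ, ← pow_succ']
    have hpp : p (p ((p ^ (m + 2)) x)) = 0 := by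
      rw [← Module.End.mul_apply, ← Module.End.mul_apply, mul_assoc, ← pow_succ', ← pow_succ']
      exact hker x
    by_contra hne
    refine (mink_self_pos_of_null hu (z := (p ^ (m + 2)) x) ?_ hne ?_ ?_).ne' (hiso x x)
    · rw [hcomm, hiso]
    · rw [hcomm, hiso]
    · intro c hc
      have := congrArg p hc
      rw [map_smul, hpp, smul_zero] at this
      exact hne this
  obtain ⟨k, hk⟩ := hnil
  have all : ∀ m : ℕ, p ^ (m + 3) = 0 → p ^ 3 = 0 := by
    intro m
    induction m with
    | zero => exact id
    | succ m ih => exact fun h => ih (step m h)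
  exact all k (by rw [pow_add, hk, zero_mul])

/-- A function invariant under `R` is invariant under every integer power of `R`. It is applied to
`p` and to the functions `y ↦ ⟨y|p y⟩`, `y ↦ ⟨y|p² y⟩` and `y ↦ ⟨y|u⟩` with `u` fixed by `R`. -/
lemma zpow_invariant {n : ℕ} {X : Type*} (R : (Fin n → ℝ) ≃ₗ[ℝ] (Fin n → ℝ))
    (f : (Fin n → ℝ) → X) (hf : ∀ x, f (R x) = f x) (q : ℤ) (x : Fin n → ℝ) :
    f ((R ^ q) x) = f x := by
  induction q with
  | zero => simp
  | succ k ih => rw [add_comm, zpow_add, zpow_one, LinearEquiv.mul_apply, hf, ih]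
  | pred k ih =>
    rw [← hf, ← LinearEquiv.mul_apply, ← zpow_one_add, add_sub_cancel, ih]

/-- The binomial expansion of `g^q = R^q (1 + p)^q`, in which `R` acts trivially on the range of `p`;
the quotient by `2` is a real division, so the formula also covers negative `q`. -/
lemma parabolic_zpow_apply {n : ℕ} (p : (Fin n → ℝ) →ₗ[ℝ] (Fin n → ℝ)) (hp3 : p ^ 3 = 0)
    (R g : (Fin n → ℝ) ≃ₗ[ℝ] (Fin n → ℝ))
    (hRp : ∀ x : Fin n → ℝ, R (p x) = p x) (hpR : ∀ x : Fin n → ℝ, p (R x) = p x)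
    (hg : ∀ x : Fin n → ℝ, g x = R (x + p x)) (q : ℤ) (x : Fin n → ℝ) :
    (g ^ q) x = (R ^ q) x + (q : ℝ) • p x + ((q : ℝ) * (q - 1) / 2) • p (p x) := by
  have hp3' : p (p (p x)) = 0 := by
    have := LinearMap.congr_fun hp3 x
    simpa [pow_succ] using this
  have hstep : ∀ q : ℤ, g ((R ^ q) x + (q : ℝ) • p x + ((q : ℝ) * (q - 1) / 2) • p (p x)) =
      (R ^ (1 + q)) x + ((1 + q : ℤ) : ℝ) • p x +
        (((1 + q : ℤ) : ℝ) * ((1 + q : ℤ) - 1) / 2) • p (p x) := by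
    intro q
    rw [hg, zpow_one_add, LinearEquiv.mul_apply]
    simp only [map_add, map_smul, hp3', hRp, zpow_invariant R p hpR, smul_zero, add_zero]
    push_cast
    module
  induction q with
  | zero => simp
  | succ k ih =>
    rw [add_comm (k : ℤ) 1, zpow_add, zpow_one, LinearEquiv.mul_apply, ih, hstep]
  | pred k ih =>
    apply g.injective
    rw [hstep, ← LinearEquiv.mul_apply, ← zpow_one_add, add_sub_cancel, ih]

/-- for a linear parabolic isometry `g = R∘(id + p)`, the complement of
the achronal domain `Ω_g` is exactly the set of `R`-periodic points lying in the
degenerate hyperplane `ker(p²)`. -/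
theorem stmt10 {n : ℕ} (hn : 3 ≤ n)
    (p : (Fin n → ℝ) →ₗ[ℝ] (Fin n → ℝ)) (hnil : IsNilpotent p) (hp : p ≠ 0)
    (hppres : ∀ x y : Fin n → ℝ, mink (x + p x) (y + p y) = mink x y)
    (R : (Fin n → ℝ) ≃ₗ[ℝ] (Fin n → ℝ))
    (hR : ∀ x y : Fin n → ℝ, mink (R x) (R y) = mink x y)
    (hfix : ∃ u : Fin n → ℝ, mink u u < 0 ∧ R u = u)
    (hRp : ∀ x : Fin n → ℝ, R (p x) = p x) (hpR : ∀ x : Fin n → ℝ, p (R x) = p x)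
    (g : (Fin n → ℝ) ≃ₗ[ℝ] (Fin n → ℝ))
    (hg : ∀ x : Fin n → ℝ, g x = R (x + p x)) :
    (achronalDomL g)ᶜ =
      {x : Fin n → ℝ | p (p x) = 0 ∧ ∃ q : ℤ, q ≠ 0 ∧ (R ^ q) x = x} := by
  obtain ⟨u, hu, hRu⟩ := hfix
  have hp3 := parabolic_cube_eq_zero hu p hnil hppres
  have hp3' : ∀ x, p (p (p x)) = 0 := fun x => by
    have := LinearMap.congr_fun hp3 x
    simpa [pow_succ] using this
  have hnull : ∀ x, mink (p (p x)) (p (p x)) = 0 := by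
    intro x
    have := hppres (p x) (p (p x))
    rw [hp3', add_zero, mink_add_left] at this
    linarith
  have horth : ∀ x, mink (p x) (p (p x)) = 0 := by
    intro x
    have := hppres (p x) (p x)
    simp only [mink_add_left, mink_add_right, hnull, mink_comm (p (p x)) (p x)] at this
    linarith
  have hpx0 : ∀ x, p (p x) = 0 → mink (p x) (p x) = 0 := by
    intro x hx
    have := hppres x (p x)
    rw [hx, add_zero, mink_add_left] at this
    linarith
  have hpxpos : ∀ x, p (p x) ≠ 0 → 0 < mink (p x) (p x) := by
    intro x hx
    refine mink_self_pos_of_null hu (hnull x) hx (horth x) fun c hc => hx ?_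
    rw [hc, map_smul, hp3', smul_zero]
  have hkey : ∀ (q : ℤ) (x : Fin n → ℝ), mink ((g ^ q) x - x) ((g ^ q) x - x) =
      mink ((R ^ q) x - x) ((R ^ q) x - x) + (q : ℝ) ^ 2 * mink (p x) (p x) := by
    intro q x
    have h1 : mink ((R ^ q) x - x) (p x) = 0 := by
      have := zpow_invariant R (fun y => mink y (p y))
        (fun y => by rw [hpR, ← hR y (p y), hRp]) q x
      simp only [zpow_invariant R p hpR] at this
      rw [mink_sub_left, this, sub_self]
    have h2 : mink ((R ^ q) x - x) (p (p x)) = 0 := by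
      have := zpow_invariant R (fun y => mink y (p (p y)))
        (fun y => by rw [hpR, ← hR y (p (p y)), hRp]) q x
      simp only [zpow_invariant R p hpR] at this
      rw [mink_sub_left, this, sub_self]
    have h3 : (g ^ q) x - x = ((R ^ q) x - x) + (q : ℝ) • p x +
        ((q : ℝ) * (q - 1) / 2) • p (p x) := by
      rw [parabolic_zpow_apply p hp3 R g hRp hpR hg]
      abel
    rw [h3]
    generalize (R ^ q) x - x = y at *
    simp only [mink_add_left, mink_add_right, mink_smul_left, mink_smul_right, h1, h2, horth,
      hnull, mink_comm (p x) y, mink_comm (p (p x)) y, mink_comm (p (p x)) (p x)]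
    ring
  have hRpos : ∀ (q : ℤ) (x : Fin n → ℝ), (R ^ q) x - x ≠ 0 →
      0 < mink ((R ^ q) x - x) ((R ^ q) x - x) := by
    intro q x hx
    refine mink_self_pos hu ?_ hx
    have := zpow_invariant R (fun y => mink y u) (fun y => by rw [← hR y u, hRu]) q x
    rw [mink_sub_left, this, sub_self]
  ext x
  simp only [achronalDomL, mem_compl_iff, mem_ofPred_eq, not_forall, not_lt, hkey]
  constructor
  · rintro ⟨q, hq, hle⟩
    have hq2 : 0 < (q : ℝ) ^ 2 := by positivity
    have hy : 0 ≤ mink ((R ^ q) x - x) ((R ^ q) x - x) := by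
      by_cases h : (R ^ q) x - x = 0
      · rw [h, mink_zero_left]
      · exact (hRpos q x h).le
    have hpp : p (p x) = 0 := by
      by_contra h
      have := mul_pos hq2 (hpxpos x h)
      linarith
    refine ⟨hpp, q, hq, ?_⟩
    by_contra h
    have := hRpos q x (sub_ne_zero.2 h)
    rw [hpx0 x hpp] at hle
    linarith
  · rintro ⟨hpp, q, hq, hx⟩
    exact ⟨q, hq, by rw [hx, sub_self, mink_zero_left, hpx0 x hpp]; simp⟩
end
end

section
/- There exists a discrete subgroup Γ of SO₀(1,2) which is a free group of rank two generated by two parabolic elements a and b whose product ab is also parabolic (the fuchsian group of the thrice-punctured sphere), with the following property: for every cocycle τ : Γ → ℝ³, if the affine action ρ_τ(γ)(x) = γx + τ(γ) preserves some future complete regular convex domain (i.e. there is Λ ⊆ 𝒮⁺ × ℝ with at least two elements such that Ω⁺(Λ) is nonempty, open, and ρ_τ(γ)(Ω⁺(Λ)) = Ω⁺(Λ) for all γ ∈ Γ), then τ is a coboundary, i.e. there is x₀ ∈ ℝ³ with τ(γ) = γx₀ − x₀ for all γ ∈ Γ. -/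
/-!
The group is the image of the congruence subgroup `Γ(2)` of `SL₂(ℤ)` acting on symmetric matrices
`X = [[p, q], [q, r]]`, `p = x₀ + x₁`, `r = x₀ - x₁`, `q = x₂`, by `X ↦ g X gᵀ`; here
`|x|² = -det X`, and `a`, `b` are the images of `[[1, 2], [0, 1]]` and `[[1, 0], [-2, 1]]`. The
resulting matrices are integral, so `Γ` is discrete. Freeness is a ping-pong on the orbit of the
base point `(1, 0, 0)` (the upper half plane `q / r + i / r`): the four ping-pong regions are
`q ≥ r`, `q < -r`, `q ≤ -p`, `q > p`.

Rigidity. Let `γ ∈ Γ` be unipotent and `N = γ - 1`, so `N³ = 0`. The iterates of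
`T x = γ x + τ(γ)` satisfy `Tⁿ x = x + n d + C(n,2) N d + C(n,3) N² τ(γ)` with `d = T x - x`
(`iterate_formula`). If `x ∈ Ω⁺(Λ)` and `(v, s) ∈ Λ`, then `⟨ρ(g) Tⁿ x | v⟩ < s` for every `g ∈ Γ`,
a cubic polynomial in `n` bounded above, so its leading coefficient `⟨g N² τ(γ) | v⟩ / 6` is
nonpositive; the same for `γ⁻¹` reverses the sign, and therefore `⟨g N² τ(γ) | v⟩ = 0` for all
`g ∈ Γ` (`mink_sq_eq_zero`). For `γ = a, b, ab` the vector `N² τ(γ)` is a multiple `c u` of the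
lightlike vector `u` fixed by `γ`. Three suitable `Γ`-translates of `u` span `ℝ³`, hence `c = 0`.
These three linear equations on `(τ(a), τ(b))` say exactly that `τ` is trivial on each cusp, and
they allow the system `τ(a) = a x₀ - x₀`, `τ(b) = b x₀ - x₀` to be solved explicitly.
-/

open Set Matrix

noncomputable section

/-- Membership in `SO₀(1,n-1)`. -/
def IsSOo {n : ℕ} (γ : GL (Fin n) ℝ) : Prop :=
  (∀ x y : Fin n → ℝ, mink ((γ : Matrix (Fin n) (Fin n) ℝ).mulVec x)
      ((γ : Matrix (Fin n) (Fin n) ℝ).mulVec y) = mink x y) ∧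
  (γ : Matrix (Fin n) (Fin n) ℝ).det = 1 ∧
  ∀ i : Fin n, (i : ℕ) = 0 → 0 < (γ : Matrix (Fin n) (Fin n) ℝ) i i

/-- Parabolic: nontrivial and unipotent (all eigenvalues equal 1). -/
def IsParabolic {n : ℕ} (γ : GL (Fin n) ℝ) : Prop :=
  γ ≠ 1 ∧ IsNilpotent ((γ : Matrix (Fin n) (Fin n) ℝ) - 1)

/-! ### The generators -/

/-- Image of `[[1, 2], [0, 1]]` over `ℤ`. -/
def aInt : GL (Fin 3) ℤ where
  val := !![3, -2, 2; 2, -1, 2; 2, -2, 1]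
  inv := !![3, -2, -2; 2, -1, -2; -2, 2, 1]
  val_inv := by decide
  inv_val := by decide

/-- Image of `[[1, 0], [-2, 1]]` over `ℤ`. -/
def bInt : GL (Fin 3) ℤ where
  val := !![3, 2, -2; -2, -1, 2; -2, -2, 1]
  inv := !![3, 2, 2; -2, -1, -2; 2, 2, 1]
  val_inv := by decide
  inv_val := by decide

/-- Extension of scalars from `ℤ` to `ℝ`. -/
abbrev toReal : GL (Fin 3) ℤ →* GL (Fin 3) ℝ :=
  Matrix.GeneralLinearGroup.map (Int.castRingHom ℝ)

/-- The parabolic generator `a`. -/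
def ga : GL (Fin 3) ℝ := toReal aInt

/-- The parabolic generator `b`. -/
def gb : GL (Fin 3) ℝ := toReal bInt

/-- The group of the thrice-punctured sphere. -/
def GG : Subgroup (GL (Fin 3) ℝ) := Subgroup.closure {ga, gb}

lemma ga_mem : ga ∈ GG := Subgroup.subset_closure (by simp)

lemma gb_mem : gb ∈ GG := Subgroup.subset_closure (by simp)

lemma ga_val : (ga : Matrix (Fin 3) (Fin 3) ℝ) = !![3, -2, 2; 2, -1, 2; 2, -2, 1] := by
  ext i j
  fin_cases i <;> fin_cases j <;>
    simp [ga, aInt, Matrix.GeneralLinearGroup.map]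

lemma gb_val : (gb : Matrix (Fin 3) (Fin 3) ℝ) = !![3, 2, -2; -2, -1, 2; -2, -2, 1] := by
  ext i j
  fin_cases i <;> fin_cases j <;>
    simp [gb, bInt, Matrix.GeneralLinearGroup.map]

lemma ga_inv_val :
    ((ga⁻¹ : GL (Fin 3) ℝ) : Matrix (Fin 3) (Fin 3) ℝ) = !![3, -2, -2; 2, -1, -2; -2, 2, 1] := by
  have h : ga⁻¹ = toReal aInt⁻¹ := by simp [ga]
  rw [h]
  change (aInt.inv).map _ = _
  ext i j
  fin_cases i <;> fin_cases j <;> simp [aInt]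

lemma gb_inv_val :
    ((gb⁻¹ : GL (Fin 3) ℝ) : Matrix (Fin 3) (Fin 3) ℝ) = !![3, 2, 2; -2, -1, -2; 2, 2, 1] := by
  have h : gb⁻¹ = toReal bInt⁻¹ := by simp [gb]
  rw [h]
  change (bInt.inv).map _ = _
  ext i j
  fin_cases i <;> fin_cases j <;> simp [bInt]

lemma gab_val : ((ga * gb : GL (Fin 3) ℝ) : Matrix (Fin 3) (Fin 3) ℝ) =
    !![9, 4, -8; 4, 1, -4; 8, 4, -7] := by
  rw [Units.val_mul, ga_val, gb_val]
  ext i j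
  fin_cases i <;> fin_cases j <;> simp [Matrix.mul_apply, Fin.sum_univ_three] <;> norm_num

lemma mink_three (x y : Fin 3 → ℝ) : mink x y = -x 0 * y 0 + x 1 * y 1 + x 2 * y 2 := by
  simp [mink, Fin.sum_univ_three]

lemma ga_mulVec (x : Fin 3 → ℝ) : (ga : Matrix (Fin 3) (Fin 3) ℝ).mulVec x =
    ![3 * x 0 - 2 * x 1 + 2 * x 2, 2 * x 0 - x 1 + 2 * x 2, 2 * x 0 - 2 * x 1 + x 2] := by
  rw [ga_val]
  ext i
  fin_cases i <;> simp [Matrix.mulVec, dotProduct, Fin.sum_univ_three] <;> ring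

lemma gb_mulVec (x : Fin 3 → ℝ) : (gb : Matrix (Fin 3) (Fin 3) ℝ).mulVec x =
    ![3 * x 0 + 2 * x 1 - 2 * x 2, -2 * x 0 - x 1 + 2 * x 2, -2 * x 0 - 2 * x 1 + x 2] := by
  rw [gb_val]
  ext i
  fin_cases i <;> simp [Matrix.mulVec, dotProduct, Fin.sum_univ_three] <;> ring

/-! ### The group lies in the identity component and is discrete -/

/-- The isometries of determinant one that preserve the open future cone. Preservation of the cone
replaces positivity of the `(0,0)` entry, being visibly stable under products. -/
def SOsub : Subgroup (GL (Fin 3) ℝ) where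
  carrier := {γ | (∀ x y : Fin 3 → ℝ, mink ((γ : Matrix (Fin 3) (Fin 3) ℝ).mulVec x)
      ((γ : Matrix (Fin 3) (Fin 3) ℝ).mulVec y) = mink x y) ∧
    (γ : Matrix (Fin 3) (Fin 3) ℝ).det = 1 ∧
    ∀ x : Fin 3 → ℝ, mink x x < 0 → 0 < x 0 →
      0 < (γ : Matrix (Fin 3) (Fin 3) ℝ).mulVec x 0}
  one_mem' := by
    refine ⟨by simp, by simp, ?_⟩
    intro x _ h
    simpa using h
  mul_mem' := by
    rintro γ δ ⟨h1, h2, h3⟩ ⟨k1, k2, k3⟩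
    refine ⟨?_, ?_, ?_⟩
    · intro x y
      rw [Units.val_mul, ← Matrix.mulVec_mulVec, ← Matrix.mulVec_mulVec, h1, k1]
    · rw [Units.val_mul, Matrix.det_mul, h2, k2, one_mul]
    · intro x hx hx0
      rw [Units.val_mul, ← Matrix.mulVec_mulVec]
      exact h3 _ (by rw [k1]; exact hx) (k3 x hx hx0)
  inv_mem' := by
    rintro γ ⟨h1, h2, h3⟩
    have hinv : ∀ x : Fin 3 → ℝ, (γ : Matrix (Fin 3) (Fin 3) ℝ).mulVec
        (((γ⁻¹ : GL (Fin 3) ℝ) : Matrix (Fin 3) (Fin 3) ℝ).mulVec x) = x := by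
      intro x
      rw [Matrix.mulVec_mulVec, ← Units.val_mul, mul_inv_cancel]
      simp
    have hm : ∀ x y : Fin 3 → ℝ,
        mink (((γ⁻¹ : GL (Fin 3) ℝ) : Matrix (Fin 3) (Fin 3) ℝ).mulVec x)
          (((γ⁻¹ : GL (Fin 3) ℝ) : Matrix (Fin 3) (Fin 3) ℝ).mulVec y) = mink x y := by
      intro x y
      rw [← h1, hinv, hinv]
    refine ⟨hm, ?_, ?_⟩
    · have : ((γ : Matrix (Fin 3) (Fin 3) ℝ) *
          ((γ⁻¹ : GL (Fin 3) ℝ) : Matrix (Fin 3) (Fin 3) ℝ)).det = 1 := by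
        rw [← Units.val_mul, mul_inv_cancel]
        simp
      rw [Matrix.det_mul, h2, one_mul] at this
      exact this
    · intro x hx hx0
      set y := ((γ⁻¹ : GL (Fin 3) ℝ) : Matrix (Fin 3) (Fin 3) ℝ).mulVec x with hy
      have hyy : mink y y < 0 := by rw [hm]; exact hx
      by_contra hcon
      have hne : y 0 ≠ 0 := by
        intro h0
        rw [mink_three, h0] at hyy
        nlinarith [sq_nonneg (y 1), sq_nonneg (y 2)]
      have hlt : y 0 < 0 := lt_of_le_of_ne (not_lt.mp hcon) hne
      -- A past-directed preimage `y` would make `γ` send the future vector `-y` to `-x`.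
      have := h3 (-y) (by rw [mink_three] at hyy ⊢; simpa using hyy) (by simpa using hlt)
      rw [Matrix.mulVec_neg, hinv] at this
      simp only [Pi.neg_apply] at this
      linarith

lemma GG_le_SOsub : GG ≤ SOsub := by
  refine (Subgroup.closure_le _).2 ?_
  have key : ∀ s t u : ℝ, -s * s + t * t + u * u < 0 → 0 < s →
      0 < 3 * s - 2 * t + 2 * u := by
    intro s t u h hs
    by_contra hc
    push Not at hc
    nlinarith [sq_nonneg (t + u), sq_nonneg (t - u)]
  rintro γ (rfl | rfl)
  · refine ⟨?_, ?_, ?_⟩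
    · intro x y
      simp only [mink_three, ga_mulVec, Matrix.cons_val]
      ring
    · rw [ga_val, Matrix.det_fin_three]
      simp
      norm_num
    · intro x hx hx0
      rw [mink_three] at hx
      simpa [ga_mulVec] using key _ _ _ hx hx0
  · refine ⟨?_, ?_, ?_⟩
    · intro x y
      simp only [mink_three, gb_mulVec, Matrix.cons_val]
      ring
    · rw [gb_val, Matrix.det_fin_three]
      simp
      norm_num
    · intro x hx hx0
      rw [mink_three] at hx
      have := key (x 0) (-x 1) (-x 2) (by linarith) hx0
      simp only [gb_mulVec, Matrix.cons_val_zero]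
      linarith

lemma mulVec_base (M : Matrix (Fin 3) (Fin 3) ℝ) (i : Fin 3) :
    M.mulVec ![1, 0, 0] i = M i 0 := by
  simp [Matrix.mulVec, dotProduct, Fin.sum_univ_three]

lemma GG_pos {γ : GL (Fin 3) ℝ} (h : γ ∈ GG) :
    0 < (γ : Matrix (Fin 3) (Fin 3) ℝ) 0 0 := by
  have := (GG_le_SOsub h).2.2 ![1, 0, 0] (by simp [mink_three]) (by simp)
  rwa [mulVec_base] at this

lemma GG_isSOo {γ : GL (Fin 3) ℝ} (h : γ ∈ GG) : IsSOo γ := by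
  refine ⟨(GG_le_SOsub h).1, (GG_le_SOsub h).2.1, ?_⟩
  intro i hi
  obtain rfl : i = 0 := Fin.ext hi
  exact GG_pos h

lemma GG_le_range : GG ≤ toReal.range := by
  refine (Subgroup.closure_le _).2 ?_
  rintro γ (rfl | rfl)
  · exact ⟨aInt, rfl⟩
  · exact ⟨bInt, rfl⟩

lemma GG_discrete : DiscreteTopology
    ↥(Units.val '' (GG : Set (GL (Fin 3) ℝ)) : Set (Matrix (Fin 3) (Fin 3) ℝ)) := by
  have hZ : ∀ M ∈ (Units.val '' (GG : Set (GL (Fin 3) ℝ)) : Set (Matrix (Fin 3) (Fin 3) ℝ)),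
      ∀ i j, ∃ k : ℤ, M i j = k := by
    rintro _ ⟨γ, hγ, rfl⟩ i j
    obtain ⟨δ, rfl⟩ := GG_le_range hγ
    exact ⟨(δ : Matrix (Fin 3) (Fin 3) ℤ) i j, by simp [Matrix.GeneralLinearGroup.map]⟩
  rw [discreteTopology_iff_isOpen_singleton]
  rintro ⟨M, hM⟩
  have ho : IsOpen {X : Matrix (Fin 3) (Fin 3) ℝ | ∀ i j, |X i j - M i j| < 1} := by
    simp only [Set.ofPred_forall]
    refine isOpen_iInter_of_finite fun i => isOpen_iInter_of_finite fun j => ?_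
    exact isOpen_lt (by fun_prop) continuous_const
  convert ho.preimage continuous_subtype_val using 1
  ext ⟨X, hX⟩
  simp only [Set.mem_singleton_iff, Subtype.mk.injEq, Set.mem_preimage, Set.mem_ofPred_eq]
  constructor
  · rintro rfl i j
    simp
  · intro h
    ext i j
    obtain ⟨k, hk⟩ := hZ X hX i j
    obtain ⟨l, hl⟩ := hZ M hM i j
    have := h i j
    rw [hk, hl] at this ⊢
    have h1 : |k - l| < 1 := by exact_mod_cast this
    rw [Int.abs_lt_one_iff] at h1
    rw [sub_eq_zero.mp h1]

/-! ### Freeness -/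

open scoped Pointwise in
/-- Ping-pong for the left action of `Γ` on itself, with regions read off from the image
`(p, q, r)` of the base point, which satisfies `p r - q² = 1` and `p, r > 0`. -/
lemma GG_free :
    Function.Injective ⇑(FreeGroup.lift fun i : Bool => if i then ga else gb) := by
  let A : GG := ⟨ga, ga_mem⟩
  let B : GG := ⟨gb, gb_mem⟩
  let f : Bool → GG := fun i => if i then A else B
  let P : GG → ℝ := fun γ => (γ.1 : Matrix (Fin 3) (Fin 3) ℝ) 0 0 +
    (γ.1 : Matrix (Fin 3) (Fin 3) ℝ) 1 0
  let R : GG → ℝ := fun γ => (γ.1 : Matrix (Fin 3) (Fin 3) ℝ) 0 0 -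
    (γ.1 : Matrix (Fin 3) (Fin 3) ℝ) 1 0
  let Q : GG → ℝ := fun γ => (γ.1 : Matrix (Fin 3) (Fin 3) ℝ) 2 0
  have hdet : ∀ γ, P γ * R γ - Q γ ^ 2 = 1 := by
    rintro ⟨γ, hγ⟩
    have := (GG_le_SOsub hγ).1 ![1, 0, 0] ![1, 0, 0]
    simp only [mink_three, mulVec_base, Matrix.cons_val] at this
    simp only [P, Q, R]
    linarith
  have hsum : ∀ γ, 0 < P γ + R γ := by
    rintro ⟨γ, hγ⟩
    have := GG_pos hγ
    simp only [P, R]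
    linarith
  have hP : ∀ γ, 0 < P γ := by
    intro γ
    by_contra hc
    nlinarith [hdet γ, hsum γ, sq_nonneg (Q γ), sq_nonneg (P γ)]
  have hR : ∀ γ, 0 < R γ := by
    intro γ
    by_contra hc
    nlinarith [hdet γ, hsum γ, sq_nonneg (Q γ), sq_nonneg (R γ)]
  have hmulA : ∀ γ, R (A * γ) = R γ ∧ Q (A * γ) = Q γ + 2 * R γ := by
    rintro ⟨γ, hγ⟩
    simp only [R, Q, A, Subgroup.coe_mul, Units.val_mul, ga_val, Matrix.mul_apply,
      Fin.sum_univ_three]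
    constructor <;> simp <;> ring
  have hmulA' : ∀ γ, R (A⁻¹ * γ) = R γ ∧ Q (A⁻¹ * γ) = Q γ - 2 * R γ := by
    rintro ⟨γ, hγ⟩
    simp only [R, Q, A, Subgroup.coe_mul, Subgroup.coe_inv, Units.val_mul, ga_inv_val,
      Matrix.mul_apply, Fin.sum_univ_three]
    constructor <;> simp <;> ring
  have hmulB : ∀ γ, P (B * γ) = P γ ∧ Q (B * γ) = Q γ - 2 * P γ := by
    rintro ⟨γ, hγ⟩
    simp only [P, Q, B, Subgroup.coe_mul, Units.val_mul, gb_val, Matrix.mul_apply,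
      Fin.sum_univ_three]
    constructor <;> simp <;> ring
  have hmulB' : ∀ γ, P (B⁻¹ * γ) = P γ ∧ Q (B⁻¹ * γ) = Q γ + 2 * P γ := by
    rintro ⟨γ, hγ⟩
    simp only [P, Q, B, Subgroup.coe_mul, Subgroup.coe_inv, Units.val_mul, gb_inv_val,
      Matrix.mul_apply, Fin.sum_univ_three]
    constructor <;> simp <;> ring
  let X : Bool → Set GG := fun i => if i then {γ | R γ ≤ Q γ} else {γ | Q γ ≤ -P γ}
  let Y : Bool → Set GG := fun i => if i then {γ | Q γ < -R γ} else {γ | P γ < Q γ}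
  have hXd : Disjoint (X true) (X false) := by
    rw [Set.disjoint_left]
    intro γ h1 h2
    simp only [X, if_true, Set.mem_ofPred_eq] at h1
    simp only [X, Bool.false_eq_true, if_false, Set.mem_ofPred_eq] at h2
    linarith [hP γ, hR γ]
  have hYd : Disjoint (Y true) (Y false) := by
    rw [Set.disjoint_left]
    intro γ h1 h2
    simp only [Y, if_true, Set.mem_ofPred_eq] at h1
    simp only [Y, Bool.false_eq_true, if_false, Set.mem_ofPred_eq] at h2
    linarith [hP γ, hR γ]
  have hf : Function.Injective ⇑(FreeGroup.lift f) := by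
    refine FreeGroup.injective_lift_of_ping_pong f X Y ?_ ?_ ?_ ?_ ?_ ?_
    · rintro (_ | _)
      · refine ⟨B, ?_⟩
        simp only [X, Bool.false_eq_true, if_false, Set.mem_ofPred_eq]
        simp [P, Q, B, gb_val]
        norm_num
      · refine ⟨A, ?_⟩
        simp only [X, if_true, Set.mem_ofPred_eq]
        simp [R, Q, A, ga_val]
        norm_num
    · rintro (_ | _) (_ | _) hij
      · exact absurd rfl hij
      · exact hXd.symm
      · exact hXd
      · exact absurd rfl hij
    · rintro (_ | _) (_ | _) hij
      · exact absurd rfl hij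
      · exact hYd.symm
      · exact hYd
      · exact absurd rfl hij
    · rintro (_ | _) (_ | _) <;> rw [Set.disjoint_left] <;> intro γ h1 h2 <;>
        simp only [X, Y, if_true, Bool.false_eq_true, if_false, Set.mem_ofPred_eq] at h1 h2
      · linarith [hP γ]
      · nlinarith [hP γ, hR γ, hdet γ]
      · nlinarith [hP γ, hR γ, hdet γ]
      · linarith [hR γ]
    · rintro (_ | _) _ ⟨γ, h, rfl⟩ <;>
        simp only [X, Y, if_true, Bool.false_eq_true, if_false, Set.mem_ofPred_eq,
          Set.mem_compl_iff, not_lt] at h ⊢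
      · change Q (B * γ) ≤ -P (B * γ)
        rw [(hmulB γ).1, (hmulB γ).2]
        linarith
      · change R (A * γ) ≤ Q (A * γ)
        rw [(hmulA γ).1, (hmulA γ).2]
        linarith
    · rintro (_ | _) _ ⟨γ, h, rfl⟩ <;>
        simp only [X, Y, if_true, Bool.false_eq_true, if_false, Set.mem_ofPred_eq,
          Set.mem_compl_iff, not_le] at h ⊢
      · change P (B⁻¹ * γ) < Q (B⁻¹ * γ)
        rw [(hmulB' γ).1, (hmulB' γ).2]
        linarith
      · change Q (A⁻¹ * γ) < -R (A⁻¹ * γ)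
        rw [(hmulA' γ).1, (hmulA' γ).2]
        linarith
  have hcomp : (FreeGroup.lift fun i : Bool => if i then ga else gb) =
      GG.subtype.comp (FreeGroup.lift f) := by
    ext1 i
    cases i <;> simp [f, A, B]
  rw [hcomp, MonoidHom.coe_comp]
  exact GG.subtype_injective.comp hf

/-! ### Parabolicity -/

lemma ga_cube : ((ga : Matrix (Fin 3) (Fin 3) ℝ) - 1) ^ 3 = 0 := by
  rw [ga_val, pow_three]
  ext i j
  fin_cases i <;> fin_cases j <;>
    simp [Matrix.mul_apply, Fin.sum_univ_three, Matrix.one_apply] <;> norm_num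

lemma gb_cube : ((gb : Matrix (Fin 3) (Fin 3) ℝ) - 1) ^ 3 = 0 := by
  rw [gb_val, pow_three]
  ext i j
  fin_cases i <;> fin_cases j <;>
    simp [Matrix.mul_apply, Fin.sum_univ_three, Matrix.one_apply] <;> norm_num

lemma gab_cube : (((ga * gb : GL (Fin 3) ℝ) : Matrix (Fin 3) (Fin 3) ℝ) - 1) ^ 3 = 0 := by
  rw [gab_val, pow_three]
  ext i j
  fin_cases i <;> fin_cases j <;>
    simp [Matrix.mul_apply, Fin.sum_univ_three, Matrix.one_apply] <;> norm_num

lemma ne_one_of_entry {γ : GL (Fin 3) ℝ} (h : (γ : Matrix (Fin 3) (Fin 3) ℝ) 0 0 ≠ 1) :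
    γ ≠ 1 := by
  rintro rfl
  simp at h

/-! ### Growth of affine unipotent orbits -/

/-- Orbit of an affine map with unipotent linear part, as a polynomial in the exponent. -/
lemma iterate_formula (M : Matrix (Fin 3) (Fin 3) ℝ) (hM : (M - 1) ^ 3 = 0)
    (t x : Fin 3 → ℝ) (n : ℕ) :
    (fun y => M.mulVec y + t)^[n] x = x + (n : ℝ) • (M.mulVec x + t - x) +
      ((n : ℝ) * (n - 1) / 2) • (M - 1).mulVec (M.mulVec x + t - x) +
      ((n : ℝ) * (n - 1) * (n - 2) / 6) • ((M - 1) ^ 2).mulVec t := by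
  set d := M.mulVec x + t - x with hd
  have hMv : ∀ y : Fin 3 → ℝ, M.mulVec y = y + (M - 1).mulVec y := by
    intro y
    rw [Matrix.sub_mulVec, Matrix.one_mulVec]
    abel
  have hd' : d = (M - 1).mulVec x + t := by
    rw [hd, hMv x]
    abel
  have h2 : (M - 1).mulVec ((M - 1).mulVec d) = ((M - 1) ^ 2).mulVec t := by
    rw [Matrix.mulVec_mulVec, ← pow_two, hd', Matrix.mulVec_add, Matrix.mulVec_mulVec,
      ← pow_succ, hM, Matrix.zero_mulVec, zero_add]
  have h3 : (M - 1).mulVec (((M - 1) ^ 2).mulVec t) = 0 := by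
    rw [Matrix.mulVec_mulVec, ← pow_succ', hM, Matrix.zero_mulVec]
  have h4 : M.mulVec (((M - 1) ^ 2).mulVec t) = ((M - 1) ^ 2).mulVec t := by
    rw [hMv, h3, add_zero]
  induction n with
  | zero => simp
  | succ n ih =>
    rw [Function.iterate_succ_apply', ih]
    simp only [Matrix.mulVec_add, Matrix.mulVec_smul]
    have e1 : M.mulVec x = x + d - t := by rw [hd]; abel
    rw [e1, hMv d, hMv ((M - 1).mulVec d), h4, h2]
    push_cast
    module

/-- A cubic in `n` that is bounded above has nonpositive leading coefficient. -/
lemma cubic_bounded (α β δ c s : ℝ)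
    (h : ∀ n : ℕ, α + n * β + (n : ℝ) * (n - 1) / 2 * δ +
      (n : ℝ) * (n - 1) * (n - 2) / 6 * c < s) : c ≤ 0 := by
  by_contra hc
  push Not at hc
  set E := |s - α| + |β| + |δ| with hE
  obtain ⟨m, hm⟩ := exists_nat_gt (72 * E / c)
  rw [div_lt_iff₀ hc] at hm
  have hm0 : (0 : ℝ) ≤ m := Nat.cast_nonneg m
  have h1 := h (m + 4)
  push_cast at h1
  -- With `n = m + 4` one has `(n - 1) (n - 2) ≥ n² / 4`, while the lower terms are at most `3 E n²`.
  set n : ℝ := (m : ℝ) + 4 with hn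
  have hn4 : 4 ≤ n := by linarith
  have hnc : 72 * E < n * c := by nlinarith
  have hs : s - α ≤ |s - α| * n ^ 2 := by
    have := le_abs_self (s - α)
    nlinarith [mul_nonneg (abs_nonneg (s - α)) (by nlinarith : (0 : ℝ) ≤ n ^ 2 - 1)]
  have hb : -(n * β) ≤ |β| * n ^ 2 := by
    have := neg_abs_le β
    nlinarith [mul_nonneg (abs_nonneg β) (by nlinarith : (0 : ℝ) ≤ n ^ 2 - n)]
  have hd : -(n * (n - 1) / 2 * δ) ≤ |δ| * n ^ 2 := by
    have h0 : 0 ≤ n * (n - 1) / 2 := by nlinarith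
    have := mul_le_mul_of_nonneg_left (neg_abs_le δ) h0
    nlinarith [abs_nonneg δ, mul_nonneg (abs_nonneg δ) (by nlinarith : (0 : ℝ) ≤ n ^ 2 + n)]
  have hcub : n ^ 2 / 24 * (n * c) ≤ n * (n - 1) * (n - 2) / 6 * c := by
    have h0 : 0 ≤ n * c := by nlinarith
    have h4 : n ^ 2 / 24 ≤ (n - 1) * (n - 2) / 6 := by nlinarith
    have := mul_le_mul_of_nonneg_right h4 h0
    linarith
  have hup : n * (n - 1) * (n - 2) / 6 * c ≤ E * n ^ 2 := by
    rw [hE]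
    linarith
  have hE0 : 0 ≤ E := by positivity
  have hn2 : 0 < n ^ 2 := by positivity
  have := mul_lt_mul_of_pos_left hnc hn2
  nlinarith [mul_nonneg hE0 hn2.le]

/-- Pairing with `v` after applying the linear map `L`. -/
def pairing (L : Matrix (Fin 3) (Fin 3) ℝ) (v : Fin 3 → ℝ) : (Fin 3 → ℝ) →ₗ[ℝ] ℝ where
  toFun y := mink (L.mulVec y) v
  map_add' x y := by
    simp only [mink_three, Matrix.mulVec_add, Pi.add_apply]
    ring
  map_smul' c x := by
    simp only [mink_three, Matrix.mulVec_smul, Pi.smul_apply, smul_eq_mul, RingHom.id_apply]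
    ring

/-- Half-space bound on a forward unipotent orbit: the cubic coefficient is nonpositive. -/
lemma pairing_sq_nonpos (M : Matrix (Fin 3) (Fin 3) ℝ) (hM : (M - 1) ^ 3 = 0)
    (t x : Fin 3 → ℝ) (φ : (Fin 3 → ℝ) →ₗ[ℝ] ℝ) (s : ℝ)
    (h : ∀ n : ℕ, φ ((fun y => M.mulVec y + t)^[n] x) < s) :
    φ (((M - 1) ^ 2).mulVec t) ≤ 0 := by
  refine cubic_bounded (φ x) (φ (M.mulVec x + t - x))
    (φ ((M - 1).mulVec (M.mulVec x + t - x))) _ s fun n => ?_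
  have := h n
  rw [iterate_formula M hM] at this
  simpa only [map_add, map_smul, smul_eq_mul] using this

lemma inv_unipotent {R : Type*} [Ring R] (M P : R) (h1 : P * M = 1) (h2 : M * P = 1)
    (hM : (M - 1) ^ 3 = 0) : (P - 1) ^ 3 = 0 ∧ (P - 1) ^ 2 * P = (M - 1) ^ 2 := by
  have hc : Commute P (M - 1) :=
    (show Commute P M from h1.trans h2.symm).sub_right (Commute.one_right P)
  have e : P - 1 = -(P * (M - 1)) := by
    rw [mul_sub, h1]
    simp
  have e2 : P * (M - 1) ^ 2 = (M - 1) ^ 2 := by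
    have : M * (M - 1) ^ 2 = (M - 1) ^ 2 := by
      have h : M * (M - 1) ^ 2 = (M - 1) ^ 3 + (M - 1) ^ 2 := by noncomm_ring
      rw [h, hM, zero_add]
    calc P * (M - 1) ^ 2 = P * (M * (M - 1) ^ 2) := by rw [this]
      _ = (M - 1) ^ 2 := by rw [← mul_assoc, h1, one_mul]
  have e3 : (P - 1) ^ 2 = (M - 1) ^ 2 := by
    rw [e, neg_sq, hc.mul_pow, pow_two P, mul_assoc, e2, e2]
  constructor
  · rw [pow_succ, e3, e, mul_neg, ← mul_assoc, ← (hc.pow_right 2).eq, e2, ← pow_succ, hM, neg_zero]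
  · rw [e3, ← (hc.pow_right 2).eq, e2]

/-! ### Rigidity -/

/-- The cubic coefficient of a unipotent element of an affine action preserving `Ω⁺(Λ)` pairs to
zero with every direction in the orbit of `Λ`. -/
lemma mink_sq_eq_zero (Γ : Subgroup (GL (Fin 3) ℝ)) (τ : GL (Fin 3) ℝ → (Fin 3 → ℝ))
    (hτ : ∀ γ ∈ Γ, ∀ γ' ∈ Γ,
      τ (γ * γ') = τ γ + (γ : Matrix (Fin 3) (Fin 3) ℝ).mulVec (τ γ'))
    (Λ : Set ((Fin 3 → ℝ) × ℝ)) (x : Fin 3 → ℝ) (hx : x ∈ OmegaPlus Λ)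
    (hinv : ∀ γ ∈ Γ, ∀ y ∈ OmegaPlus Λ,
      (γ : Matrix (Fin 3) (Fin 3) ℝ).mulVec y + τ γ ∈ OmegaPlus Λ)
    (v : Fin 3 → ℝ) (s : ℝ) (hv : (v, s) ∈ Λ)
    (γ : GL (Fin 3) ℝ) (hγ : γ ∈ Γ) (hu : ((γ : Matrix (Fin 3) (Fin 3) ℝ) - 1) ^ 3 = 0)
    (g : GL (Fin 3) ℝ) (hg : g ∈ Γ) :
    mink ((g : Matrix (Fin 3) (Fin 3) ℝ).mulVec
      ((((γ : Matrix (Fin 3) (Fin 3) ℝ) - 1) ^ 2).mulVec (τ γ))) v = 0 := by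
  have main : ∀ δ ∈ Γ, ((δ : Matrix (Fin 3) (Fin 3) ℝ) - 1) ^ 3 = 0 →
      pairing g v ((((δ : Matrix (Fin 3) (Fin 3) ℝ) - 1) ^ 2).mulVec (τ δ)) ≤ 0 := by
    intro δ hδ hδu
    refine pairing_sq_nonpos _ hδu _ x _ (s - mink (τ g) v) fun n => ?_
    have hmem : (fun y => (δ : Matrix (Fin 3) (Fin 3) ℝ).mulVec y + τ δ)^[n] x ∈ OmegaPlus Λ := by
      induction n with
      | zero => exact hx
      | succ n ih =>
        rw [Function.iterate_succ_apply']
        exact hinv δ hδ _ ih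
    have := hinv g hg _ hmem (v, s) hv
    simp only [pairing, LinearMap.coe_mk, AddHom.coe_mk]
    simp only [mink_three, Pi.add_apply] at this ⊢
    linarith
  have hP : ((γ⁻¹ : GL (Fin 3) ℝ) : Matrix (Fin 3) (Fin 3) ℝ) * γ = 1 := by
    rw [← Units.val_mul, inv_mul_cancel, Units.val_one]
  have hP' : (γ : Matrix (Fin 3) (Fin 3) ℝ) * (γ⁻¹ : GL (Fin 3) ℝ) = 1 := by
    rw [← Units.val_mul, mul_inv_cancel, Units.val_one]
  obtain ⟨i1, i2⟩ := inv_unipotent _ _ hP hP' hu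
  have hτ1 : τ 1 = 0 := by
    have := hτ 1 Γ.one_mem 1 Γ.one_mem
    simpa using this
  have hτi : τ γ⁻¹ = -((γ⁻¹ : GL (Fin 3) ℝ) : Matrix (Fin 3) (Fin 3) ℝ).mulVec (τ γ) := by
    have := hτ γ⁻¹ (Γ.inv_mem hγ) γ hγ
    rw [inv_mul_cancel, hτ1] at this
    exact eq_neg_of_add_eq_zero_left this.symm
  have l1 := main γ hγ hu
  have l2 := main γ⁻¹ (Γ.inv_mem hγ) i1
  rw [hτi, Matrix.mulVec_neg, Matrix.mulVec_mulVec, i2, map_neg] at l2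
  exact le_antisymm l1 (neg_nonpos.mp l2)

lemma ga_sq_mulVec (t : Fin 3 → ℝ) : (((ga : Matrix (Fin 3) (Fin 3) ℝ) - 1) ^ 2).mulVec t =
    ![4 * (t 0 - t 1), 4 * (t 0 - t 1), 0] := by
  rw [ga_val, pow_two]
  ext i
  fin_cases i <;>
    simp [Matrix.mulVec, dotProduct, Matrix.mul_apply, Fin.sum_univ_three, Matrix.one_apply] <;>
    ring

lemma gb_sq_mulVec (t : Fin 3 → ℝ) : (((gb : Matrix (Fin 3) (Fin 3) ℝ) - 1) ^ 2).mulVec t =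
    ![4 * (t 0 + t 1), -4 * (t 0 + t 1), 0] := by
  rw [gb_val, pow_two]
  ext i
  fin_cases i <;>
    simp [Matrix.mulVec, dotProduct, Matrix.mul_apply, Fin.sum_univ_three, Matrix.one_apply] <;>
    ring

lemma gab_sq_mulVec (t : Fin 3 → ℝ) :
    ((((ga * gb : GL (Fin 3) ℝ) : Matrix (Fin 3) (Fin 3) ℝ) - 1) ^ 2).mulVec t =
      ![16 * (t 0 - t 2), 0, 16 * (t 0 - t 2)] := by
  rw [gab_val, pow_two]
  ext i
  fin_cases i <;>
    simp [Matrix.mulVec, dotProduct, Matrix.mul_apply, Fin.sum_univ_three, Matrix.one_apply] <;>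
    ring


/-- there is a discrete subgroup `Γ ≤ SO₀(1,2)`, free of rank two on two
parabolic generators `a`, `b` with `ab` parabolic (the thrice-punctured sphere group),
such that every cocycle on `Γ` preserving a future complete regular convex domain is a
coboundary. -/
theorem stmt15 :
    ∃ (Γ : Subgroup (GL (Fin 3) ℝ)) (a b : GL (Fin 3) ℝ),
      a ∈ Γ ∧ b ∈ Γ ∧
      (∀ γ ∈ Γ, IsSOo γ) ∧
      DiscreteTopology
        ↥(Units.val '' (Γ : Set (GL (Fin 3) ℝ)) : Set (Matrix (Fin 3) (Fin 3) ℝ)) ∧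
      Γ = Subgroup.closure {a, b} ∧
      Function.Injective ⇑(FreeGroup.lift fun i : Bool => if i then a else b) ∧
      IsParabolic a ∧ IsParabolic b ∧ IsParabolic (a * b) ∧
      ∀ τ : GL (Fin 3) ℝ → (Fin 3 → ℝ),
        (∀ γ ∈ Γ, ∀ γ' ∈ Γ,
          τ (γ * γ') = τ γ + (γ : Matrix (Fin 3) (Fin 3) ℝ).mulVec (τ γ')) →
        (∃ Λ : Set ((Fin 3 → ℝ) × ℝ), Λ ⊆ Splus 3 ×ˢ (univ : Set ℝ) ∧ Λ.Nontrivial ∧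
          (OmegaPlus Λ).Nonempty ∧ IsOpen (OmegaPlus Λ) ∧
          ∀ γ ∈ Γ, (fun x => (γ : Matrix (Fin 3) (Fin 3) ℝ).mulVec x + τ γ) ''
              OmegaPlus Λ = OmegaPlus Λ) →
        ∃ x₀ : Fin 3 → ℝ, ∀ γ ∈ Γ,
          τ γ = (γ : Matrix (Fin 3) (Fin 3) ℝ).mulVec x₀ - x₀ := by
  refine ⟨GG, ga, gb, ga_mem, gb_mem, fun γ h => GG_isSOo h, GG_discrete, rfl, GG_free,
    ⟨ne_one_of_entry (by simp [ga_val]), 3, ga_cube⟩,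
    ⟨ne_one_of_entry (by simp [gb_val]), 3, gb_cube⟩,
    ⟨ne_one_of_entry (by rw [gab_val]; simp), 3, gab_cube⟩, ?_⟩
  rintro τ hτ ⟨Λ, hΛ, hnt, ⟨x, hx⟩, -, himg⟩
  obtain ⟨⟨v, s⟩, hv⟩ := hnt.nonempty
  have hv0 : 0 < v 0 := (hΛ hv).1.2.2 0 rfl
  have hinv : ∀ γ ∈ GG, ∀ y ∈ OmegaPlus Λ,
      (γ : Matrix (Fin 3) (Fin 3) ℝ).mulVec y + τ γ ∈ OmegaPlus Λ := by
    intro γ hγ y hy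
    rw [← himg γ hγ]
    exact ⟨y, hy, rfl⟩
  have key := mink_sq_eq_zero GG τ hτ Λ x hx hinv v s hv
  have hab : ga * gb ∈ GG := GG.mul_mem ga_mem gb_mem
  -- The translates of the fixed vector by `1, b, b²` are linearly independent.
  have ca : τ ga 0 = τ ga 1 := by
    have h0 := key ga ga_mem ga_cube 1 GG.one_mem
    have h1 := key ga ga_mem ga_cube gb gb_mem
    have h2 := key ga ga_mem ga_cube (gb * gb) (GG.mul_mem gb_mem gb_mem)
    simp only [Units.val_mul, Units.val_one, Matrix.one_mulVec, ← Matrix.mulVec_mulVec,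
      ga_sq_mulVec, gb_mulVec, mink_three, Matrix.cons_val] at h0 h1 h2
    have : (τ ga 0 - τ ga 1) * v 0 = 0 := by linarith
    have := (mul_eq_zero.mp this).resolve_right hv0.ne'
    linarith
  -- Here `1, a, a²` provide independent translates.
  have cb : τ gb 0 = -τ gb 1 := by
    have h0 := key gb gb_mem gb_cube 1 GG.one_mem
    have h1 := key gb gb_mem gb_cube ga ga_mem
    have h2 := key gb gb_mem gb_cube (ga * ga) (GG.mul_mem ga_mem ga_mem)
    simp only [Units.val_mul, Units.val_one, Matrix.one_mulVec, ← Matrix.mulVec_mulVec,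
      gb_sq_mulVec, ga_mulVec, mink_three, Matrix.cons_val] at h0 h1 h2
    have : (τ gb 0 + τ gb 1) * v 0 = 0 := by linarith
    have := (mul_eq_zero.mp this).resolve_right hv0.ne'
    linarith
  have cab : τ (ga * gb) 0 = τ (ga * gb) 2 := by
    have h0 := key (ga * gb) hab gab_cube 1 GG.one_mem
    have h1 := key (ga * gb) hab gab_cube ga ga_mem
    have h2 := key (ga * gb) hab gab_cube (ga * ga) (GG.mul_mem ga_mem ga_mem)
    simp only [gab_sq_mulVec] at h0 h1 h2
    simp only [Units.val_mul, Units.val_one, Matrix.one_mulVec, ← Matrix.mulVec_mulVec,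
      ga_mulVec, mink_three, Matrix.cons_val] at h0 h1 h2
    have : (τ (ga * gb) 0 - τ (ga * gb) 2) * v 0 = 0 := by linarith
    have := (mul_eq_zero.mp this).resolve_right hv0.ne'
    linarith
  rw [hτ ga ga_mem gb gb_mem, ga_mulVec] at cab
  simp only [Pi.add_apply, Matrix.cons_val] at cab
  let x₀ : Fin 3 → ℝ := ![(τ ga 2 - τ gb 2) / 4, (-τ gb 2 - τ ga 2) / 4, (τ ga 0 - τ ga 2) / 2]
  have sa : τ ga = (ga : Matrix (Fin 3) (Fin 3) ℝ).mulVec x₀ - x₀ := by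
    rw [ga_mulVec]
    ext i
    fin_cases i <;> simp [x₀] <;> linarith
  have sb : τ gb = (gb : Matrix (Fin 3) (Fin 3) ℝ).mulVec x₀ - x₀ := by
    rw [gb_mulVec]
    ext i
    fin_cases i <;> simp [x₀] <;> linarith
  have hτ1 : τ 1 = 0 := by
    have := hτ 1 GG.one_mem 1 GG.one_mem
    simpa using this
  refine ⟨x₀, fun γ hγ => ?_⟩
  refine Subgroup.closure_induction (p := fun γ _ =>
    τ γ = (γ : Matrix (Fin 3) (Fin 3) ℝ).mulVec x₀ - x₀) ?_ ?_ ?_ ?_ hγ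
  · rintro γ (rfl | rfl)
    · exact sa
    · exact sb
  · simp [hτ1]
  · intro γ δ hγ hδ h1 h2
    rw [hτ γ hγ δ hδ, h1, h2, Units.val_mul, ← Matrix.mulVec_mulVec, Matrix.mulVec_sub]
    abel
  · intro γ hγ h
    have := hτ γ⁻¹ (GG.inv_mem hγ) γ hγ
    rw [inv_mul_cancel, hτ1, h, Matrix.mulVec_sub, Matrix.mulVec_mulVec, ← Units.val_mul,
      inv_mul_cancel, Units.val_one, Matrix.one_mulVec] at this
    have h' := eq_neg_of_add_eq_zero_left this.symm
    rw [h', neg_sub]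
end
end
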